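/- arXiv:2107.13282 — 3 statements merged into one kernel-verified Lean document; each statement's English description precedes it below -/
import Mathlib

section
/- Let G = (V,E) be a cubic graph on n vertices with no connected component whose induced subgraph is isomorphic to K4. Let D be the set of all 4-element vertex subsets of V inducing a diamond, and let T be the set of all 3-element vertex subsets of V inducing a triangle and not contained in any member of D. Then every partition 𝒫 of V satisfies d(𝒫) ≤ (5/4)·|D| + |T| + (1/4)·(n − 3·|T| − 4·|D|). -/
open Finset

/-- The number of edges of `G` with both endpoints in `S`. -/
noncomputable def edgesIn {V : Type*} (G : SimpleGraph V) (S : Finset V) : ℕ :=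
  Set.ncard {e : Sym2 V | e ∈ G.edgeSet ∧ ∀ v ∈ e, v ∈ S}

/-- The density of the set `S` of vertices in `G`: `|E(S)|/|S|`. -/
noncomputable def density {V : Type*} (G : SimpleGraph V) (S : Finset V) : ℚ :=
  (edgesIn G S : ℚ) / (S.card : ℚ)

/-- The density of a partition: the sum of the densities of its parts. -/
noncomputable def partDensity {V : Type*} [DecidableEq V] (G : SimpleGraph V) {s : Finset V}
    (P : Finpartition s) : ℚ :=
  ∑ p ∈ P.parts, density G p

/-- `S` is the vertex set of a connected component of `G` inducing a `K₄`:
it has 4 vertices, is a clique, and is closed under adjacency. -/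
def IsK4Component {V : Type*} (G : SimpleGraph V) (S : Finset V) : Prop :=
  S.card = 4 ∧ (∀ u ∈ S, ∀ v ∈ S, u ≠ v → G.Adj u v) ∧ (∀ u ∈ S, ∀ v, G.Adj u v → v ∈ S)

/-- The diamond graph: `K₄` minus the edge `{0,1}`. -/
def diamondGraph : SimpleGraph (Fin 4) :=
  SimpleGraph.fromEdgeSet {s(0, 2), s(0, 3), s(1, 2), s(1, 3), s(2, 3)}

lemma edgesIn_eq {V : Type*} [Fintype V] [DecidableEq V] (G : SimpleGraph V) [DecidableRel G.Adj]
    (S : Finset V) :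
    edgesIn G S = #(G.induce (S : Set V)).edgeFinset := by
  have h := congrArg Finset.card (SimpleGraph.map_edgeFinset_induce (G := G) (s := (S : Set V)))
  rw [Finset.card_map] at h
  have h2 : #(G.induce (S : Set V)).edgeFinset = #(G.edgeFinset ∩ S.sym2) := by
    convert h using 2
    · simp
    · ext e
      simp only [Finset.mem_inter, Finset.mem_sym2_iff, Set.mem_toFinset, Finset.mem_coe]
  rw [h2, edgesIn, ← Set.ncard_coe_finset]
  congr 1
  ext e
  simp only [Set.mem_ofPred_eq, Finset.mem_coe, Finset.mem_inter, Finset.mem_sym2_iff,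
    SimpleGraph.mem_edgeFinset]

lemma free_bound {V : Type*} [Fintype V] [DecidableEq V] (G : SimpleGraph V) [DecidableRel G.Adj]
    (S : Finset V) (h : G.CliqueFreeOn (S : Set V) 3) :
    4 * edgesIn G S ≤ #S * #S := by
  rw [edgesIn_eq]
  have h1 := (SimpleGraph.cliqueFree_induce_iff (G := G) (S : Set V) 3).2 h
  have h2 := SimpleGraph.CliqueFree.card_edgeFinset_le (r := 2) h1
  simp only [Finset.coe_sort_coe, Fintype.card_coe] at h2
  generalize #(G.induce (S : Set V)).edgeFinset = e at *
  have h3 : (#S % 2).choose 2 = 0 := by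
    rcases Nat.mod_two_eq_zero_or_one #S with h | h <;> rw [h] <;> rfl
  rw [h3] at h2
  have : e ≤ (#S ^ 2) / 4 := by
    refine h2.trans ?_
    simp only [add_zero]
    norm_num
    exact Nat.div_le_div_right (Nat.sub_le _ _)
  rw [← sq]
  omega

lemma cubic_bound {V : Type*} [Fintype V] [DecidableEq V] (G : SimpleGraph V) [DecidableRel G.Adj]
    (hcubic : ∀ v : V, G.degree v = 3)
    (S : Finset V) : 2 * edgesIn G S ≤ 3 * #S := by
  rw [edgesIn_eq, ← SimpleGraph.sum_degrees_eq_twice_card_edges]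
  have : ∀ v ∈ (univ : Finset (S : Set V)), (G.induce (S : Set V)).degree v ≤ 3 := by
    intro v _
    rw [← hcubic v]
    exact (SimpleGraph.Embedding.induce (G := G) (S : Set V)).toCopy.degree_le v
  refine (Finset.sum_le_card_nsmul _ _ _ this).trans ?_
  simp [mul_comm]

lemma choose_bound {V : Type*} [Fintype V] [DecidableEq V] (G : SimpleGraph V) [DecidableRel G.Adj]
    (S : Finset V) : edgesIn G S ≤ (#S).choose 2 := by
  rw [edgesIn_eq]
  simpa using (G.induce (S : Set V)).card_edgeFinset_le_card_choose_two

lemma four_bound {V : Type*} [Fintype V] [DecidableEq V] (G : SimpleGraph V) [DecidableRel G.Adj]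
    (hcubic : ∀ v : V, G.degree v = 3)
    (hK4 : ¬ ∃ S : Finset V, IsK4Component G S)
    (S : Finset V) (hS : #S = 4) : edgesIn G S ≤ 5 := by
  by_contra hlt
  apply hK4
  have h1 : (G.induce (S : Set V)).edgeFinset = (⊤ : SimpleGraph (S : Set V)).edgeFinset := by
    apply Finset.eq_of_subset_of_card_le
    · exact SimpleGraph.edgeFinset_mono le_top
    · rw [SimpleGraph.card_edgeFinset_top_eq_card_choose_two, ← edgesIn_eq]
      simp [hS]
      have : Nat.choose 4 2 = 6 := rfl
      omega
  have h2 : G.induce (S : Set V) = ⊤ := SimpleGraph.edgeFinset_inj.1 h1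
  have hc : ∀ u ∈ S, ∀ v ∈ S, u ≠ v → G.Adj u v := by
    intro u hu v hv huv
    have : (G.induce (S : Set V)).Adj ⟨u, hu⟩ ⟨v, hv⟩ := by
      rw [h2]; simpa using huv
    simpa using this
  refine ⟨S, hS, hc, ?_⟩
  intro u hu v huv
  have hsub : S.erase u ⊆ G.neighborFinset u := by
    intro w hw
    rw [Finset.mem_erase] at hw
    simpa using hc u hu w hw.2 hw.1.symm
  have heq := Finset.eq_of_subset_of_card_le hsub (by
    rw [G.card_neighborFinset_eq_degree, hcubic, Finset.card_erase_of_mem hu, hS])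
  have : v ∈ S.erase u := by rw [heq]; simpa using huv
  exact Finset.mem_of_mem_erase this

lemma tri_bound {V : Type*} [Fintype V] [DecidableEq V] (G : SimpleGraph V) [DecidableRel G.Adj]
    (hcubic : ∀ v : V, G.degree v = 3)
    (hK4 : ¬ ∃ S : Finset V, IsK4Component G S)
    (S : Finset V) : 4 * edgesIn G S ≤ #S * (#S + 1) := by
  have h1 := cubic_bound G hcubic S
  have h2 := choose_bound G S
  have h3 := four_bound G hcubic hK4 S
  by_cases h5 : 5 ≤ #S
  · nlinarith
  · generalize #S = k at *
    interval_cases k <;> simp [Nat.choose] at * <;> omega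

theorem stmt7 {V : Type*} [Fintype V] [DecidableEq V] (G : SimpleGraph V) [DecidableRel G.Adj]
    (n : ℕ) (hn : Fintype.card V = n)
    (hcubic : ∀ v : V, G.degree v = 3)
    (hK4 : ¬ ∃ S : Finset V, IsK4Component G S)
    (D T : Set (Finset V))
    (hD : D = {S : Finset V | S.card = 4 ∧ Nonempty (G.induce (S : Set V) ≃g diamondGraph)})
    (hT : T = {S : Finset V | S.card = 3 ∧ (∀ u ∈ S, ∀ v ∈ S, u ≠ v → G.Adj u v) ∧
      ∀ S' ∈ D, ¬ S ⊆ S'})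
    (P : Finpartition (univ : Finset V)) :
    partDensity G P ≤
      (5 / 4) * (D.ncard : ℚ) + (T.ncard : ℚ) +
        (1 / 4) * ((n : ℚ) - 3 * (T.ncard : ℚ) - 4 * (D.ncard : ℚ)) := by
  classical
  have hex : ∀ p : Finset V, ¬ G.CliqueFreeOn (p : Set V) 3 →
      ∃ t s : Finset V, t ⊆ p ∧ #t = 3 ∧ t ⊆ s ∧ #s ≤ 4 ∧ s ∈ D ∪ T := by
    intro p hp
    simp only [SimpleGraph.CliqueFreeOn, not_forall, not_not] at hp
    obtain ⟨t, htp, ht⟩ := hp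
    by_cases h : ∃ S' ∈ D, t ⊆ S'
    · obtain ⟨S', hS', hts⟩ := h
      refine ⟨t, S', by exact_mod_cast htp, ht.card_eq, hts, ?_, Or.inl hS'⟩
      rw [hD] at hS'
      exact hS'.1.le
    · refine ⟨t, t, by exact_mod_cast htp, ht.card_eq, subset_rfl, by rw [ht.card_eq]; norm_num,
        Or.inr ?_⟩
      rw [hT]
      refine ⟨ht.card_eq, fun u hu v hv huv => ht.isClique hu hv huv, fun S' hS' hs => h ⟨S', hS', hs⟩⟩
  choose! t f htp ht3 htf hf4 hfm using hex
  let B := P.parts.filter (fun p : Finset V => ¬ G.CliqueFreeOn (p : Set V) 3)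
  have hfin : (D ∪ T).Finite := Set.toFinite _
  have hB : #B ≤ D.ncard + T.ncard := by
    calc #B ≤ #hfin.toFinset := by
          apply Finset.card_le_card_of_injOn f
          · intro p hp
            have hp' := (Finset.mem_filter.1 hp).2
            simpa using hfm p hp'
          · intro p hp q hq hpq
            obtain ⟨hpP, hp'⟩ := Finset.mem_filter.1 hp
            obtain ⟨hqP, hq'⟩ := Finset.mem_filter.1 hq
            by_contra hne
            have hdis : Disjoint p q := P.disjoint hpP hqP hne
            have hd : Disjoint (t p) (t q) := hdis.mono (htp p hp') (htp q hq')
            have hu : t p ∪ t q ⊆ f p :=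
              Finset.union_subset (htf p hp') (hpq ▸ htf q hq')
            have hc := Finset.card_le_card hu
            rw [Finset.card_union_of_disjoint hd, ht3 p hp', ht3 q hq'] at hc
            have := hf4 p hp'
            omega
      _ = (D ∪ T).ncard := (Set.ncard_eq_toFinset_card _ hfin).symm
      _ ≤ _ := Set.ncard_union_le _ _
  have hpart : ∀ p ∈ P.parts, density G p ≤ (#p : ℚ) / 4 +
      (if ¬ G.CliqueFreeOn (p : Set V) 3 then 1 / 4 else 0) := by
    intro p hp
    have hpos : (0 : ℚ) < #p := by
      exact_mod_cast Finset.card_pos.2 (P.nonempty_of_mem_parts hp)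
    rw [density, div_le_iff₀ hpos]
    split_ifs with h
    · have : (4 * edgesIn G p : ℚ) ≤ #p * #p := by
        exact_mod_cast free_bound G p h
      linarith
    · have : (4 * edgesIn G p : ℚ) ≤ #p * (#p + 1) := by
        exact_mod_cast tri_bound G hcubic hK4 p
      linarith
  have hsum : (∑ p ∈ P.parts, (#p : ℚ)) = n := by
    rw [← hn, ← Finset.card_univ, ← P.sum_card_parts]
    push_cast
    rfl
  have hmain := Finset.sum_le_sum hpart
  rw [Finset.sum_add_distrib, ← Finset.sum_div, hsum, ← Finset.sum_filter, Finset.sum_const,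
    nsmul_eq_mul] at hmain
  have hB' : (#B : ℚ) ≤ D.ncard + T.ncard := by exact_mod_cast hB
  change partDensity G P ≤ n / 4 + (#B : ℚ) * (1 / 4) at hmain
  linarith
end

section
/- Let G = (V,E) be a cubic graph on n vertices with no connected component whose induced subgraph is isomorphic to K4. Let D be the set of all 4-element vertex subsets of V inducing a diamond, and let T be the set of all 3-element vertex subsets of V inducing a triangle and not contained in any member of D. Then there exists a partition 𝒫 of V with d(𝒫) ≥ (5/4)·|D| + |T| + (1/4)·(n − 3·|T| − 4·|D| − n/4) = (1/4)·|D| + (1/4)·|T| + (3/16)·n; consequently, every partition 𝒬 of V satisfies d(𝒬) ≤ (4/3)·d(𝒫). -/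
open Finset

theorem tb {X : Type*} [Fintype X] [DecidableEq X] (J : SimpleGraph X) (k : ℕ)
    (hpar : Even (Fintype.card X + k))
    (hC : ∀ (U : Finset X) (C : Finset (Finset X)),
      (∀ A ∈ C, Odd A.card ∧ Disjoint A U ∧ ∀ x ∈ A, ∀ y, y ∉ U → J.Adj x y → y ∈ A) →
      (∀ A ∈ C, ∀ B ∈ C, A ≠ B → Disjoint A B) → C.card ≤ U.card + k + 1) :
    ∃ (S : Finset X) (f : X → X), (∀ x ∈ S, f x ∈ S ∧ f (f x) = x ∧ J.Adj x (f x)) ∧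
      Fintype.card X ≤ S.card + k := by
  classical
  let H : SimpleGraph (X ⊕ Fin k) :=
    { Adj := fun a b => a ≠ b ∧ ∀ x y, a = Sum.inl x → b = Sum.inl y → J.Adj x y
      symm := ⟨fun a b h => ⟨h.1.symm, fun x y hx hy => (h.2 y x hy hx).symm⟩⟩
      loopless := ⟨fun a h => h.1 rfl⟩ }
  have hT : ∃ M : H.Subgraph, M.IsPerfectMatching := by
    rw [SimpleGraph.tutte]
    intro u hu
    rw [SimpleGraph.IsTutteViolator] at hu
    set K := ((⊤ : H.Subgraph).deleteVerts u).coe with hK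
    have hodd := SimpleGraph.odd_ncard_oddComponents (G := K)
    have hcard : Nat.card ((⊤ : H.Subgraph).deleteVerts u).verts + u.ncard = Fintype.card X + k := by
      have := Set.ncard_add_ncard_compl u
      simp only [Nat.card_eq_fintype_card, Fintype.card_sum, Fintype.card_fin] at this
      rw [← this, Nat.card_coe_set_eq, add_comm]
      congr 2
      ext; simp
    have hq : u.ncard + 2 ≤ K.oddComponents.ncard := by
      rw [← hcard] at hpar
      by_contra hlt
      have : K.oddComponents.ncard = u.ncard + 1 := by omega
      rw [this] at hodd
      rw [Nat.odd_iff, Nat.odd_iff] at hodd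
      rw [Nat.even_iff] at hpar
      omega
    by_cases hi : ∃ i : Fin k, Sum.inr i ∉ u
    · obtain ⟨i, hi⟩ := hi
      have hle : K.oddComponents.ncard ≤ 1 := by
        apply Set.ncard_le_one_iff_subsingleton.2
        intro c _ d _
        have key : ∀ v, K.connectedComponentMk v = K.connectedComponentMk ⟨Sum.inr i, by simpa using hi⟩ := by
          intro v
          by_cases hv : v = ⟨Sum.inr i, by simpa using hi⟩
          · rw [hv]
          · apply SimpleGraph.ConnectedComponent.sound
            apply SimpleGraph.Adj.reachable
            have h2 := v.2
            have : v.1 ≠ Sum.inr i := fun h => hv (Subtype.ext h)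
            simp [hK, H, this, hi] at h2 ⊢
            exact h2
        induction c using SimpleGraph.ConnectedComponent.ind with | _ v =>
        induction d using SimpleGraph.ConnectedComponent.ind with | _ w =>
        rw [key, key w]
      omega
    · push Not at hi
      let U : Finset X := univ.filter (fun x => Sum.inl x ∈ u)
      have hU : u.ncard = U.card + k := by
        have : u = ((U.disjSum (univ : Finset (Fin k)) : Finset (X ⊕ Fin k)) : Set (X ⊕ Fin k)) := by
          ext z; rcases z with z | z <;> simp [U, hi]
        rw [this, Set.ncard_coe_finset]; simp
      have hmem : ∀ x, Sum.inl x ∉ u → Sum.inl x ∈ ((⊤ : H.Subgraph).deleteVerts u).verts := by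
        intro x hx; simpa using hx
      let φ : K.ConnectedComponent → Finset X := fun c =>
        univ.filter (fun x => ∃ h : Sum.inl x ∉ u, K.connectedComponentMk ⟨Sum.inl x, hmem x h⟩ = c)
      have hφc : ∀ c, (φ c).card = c.supp.ncard := by
        intro c
        rw [← Set.ncard_coe_finset]
        apply Set.ncard_congr (fun x hx => ⟨Sum.inl x, hmem x (by
          simp [φ] at hx; exact hx.1)⟩)
        · intro x hx
          simp [φ] at hx
          exact hx.2
        · intro x y hx hy h
          simpa using h
        · rintro ⟨z | z, hz⟩ hb
          · refine ⟨z, ?_, rfl⟩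
            simp [φ]
            exact ⟨by simpa using hz, hb⟩
          · exact absurd (hi z) (by simpa using hz)
      have hdis : ∀ c d, c ≠ d → Disjoint (φ c) (φ d) := by
        intro c d hcd
        rw [Finset.disjoint_left]
        intro x hx hy
        simp [φ] at hx hy
        exact hcd (hx.2.symm.trans hy.2)
      have hinj : Set.InjOn φ K.oddComponents := by
        intro c hc d hd h
        by_contra hne
        have h1 := hdis c d hne
        rw [h, disjoint_self] at h1
        have h2 : Odd (φ d).card := by rw [hφc]; exact hd
        rw [h1] at h2
        simp at h2
      have := hC U (K.oddComponents.toFinite.toFinset.image φ) ?_ ?_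
      · rw [card_image_of_injOn (by simpa using hinj), ← Set.ncard_eq_toFinset_card] at this
        omega
      · intro A hA
        simp only [mem_image, Set.Finite.mem_toFinset] at hA
        obtain ⟨c, hc, rfl⟩ := hA
        refine ⟨by rw [hφc]; exact hc, ?_, ?_⟩
        · rw [Finset.disjoint_left]
          intro x hx hy
          simp [φ, U] at hx hy
          exact hx.1 hy
        · intro x hx y hy hxy
          simp [φ, U] at hx hy ⊢
          obtain ⟨hx, rfl⟩ := hx
          refine ⟨hy, ?_⟩
          apply SimpleGraph.ConnectedComponent.sound
          apply SimpleGraph.Adj.reachable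
          simp [hK, H, hx, hy, hxy.symm, hxy.ne']
      · intro A hA B hB hAB
        simp only [mem_image, Set.Finite.mem_toFinset] at hA hB
        obtain ⟨c, hc, rfl⟩ := hA
        obtain ⟨d, hd, rfl⟩ := hB
        exact hdis c d (fun h => hAB (by rw [h]))
  obtain ⟨M, hM⟩ := hT
  rw [SimpleGraph.Subgraph.isPerfectMatching_iff] at hM
  choose g hg hg' using hM
  have hgg : ∀ v, g (g v) = v := fun v => (hg' (g v) v (hg v).symm).symm
  let S : Finset X := univ.filter (fun x => (g (Sum.inl x)).isLeft)
  refine ⟨S, fun x => (g (Sum.inl x)).elim id (fun _ => x), ?_, ?_⟩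
  · intro x hx
    simp only [S, mem_filter, mem_univ, true_and] at hx
    obtain ⟨y, hy⟩ := Sum.isLeft_iff.1 hx
    have h2 := hgg (Sum.inl x)
    rw [hy] at h2
    have h3 := (hg (Sum.inl x)).adj_sub
    rw [hy] at h3
    refine ⟨by simp [S, hy, h2], by simp [hy, h2], ?_⟩
    simp only [hy]
    exact h3.2 x y rfl rfl
  · have : (Sᶜ.map (Function.Embedding.inl (β := Fin k))).card ≤
        ((univ : Finset (Fin k)).map (Function.Embedding.inr (α := X))).card := by
      apply Finset.card_le_card_of_injOn g
      · intro z hz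
        simp only [coe_map, Set.mem_image, mem_coe, mem_compl] at hz
        obtain ⟨x, hx, rfl⟩ := hz
        simp [S] at hx
        obtain ⟨y, hy⟩ := Sum.isRight_iff.1 hx
        simp [hy]
      · intro a _ b _ h
        rw [← hgg a, h, hgg]
    have h2 := card_add_card_compl S
    simp only [card_map, card_univ, Fintype.card_fin] at this
    omega

theorem two_edgesIn {V : Type*} [Fintype V] [DecidableEq V] (G : SimpleGraph V)
    [DecidableRel G.Adj] (S : Finset V) :
    2 * edgesIn G S = ∑ x ∈ S, (S.filter (G.Adj x)).card := by
  classical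
  let K : SimpleGraph V :=
    { Adj := fun a b => G.Adj a b ∧ a ∈ S ∧ b ∈ S
      symm := ⟨fun a b h => ⟨h.1.symm, h.2.2, h.2.1⟩⟩
      loopless := ⟨fun a h => G.loopless.irrefl a h.1⟩ }
  have h := K.sum_degrees_eq_twice_card_edges
  have h1 : edgesIn G S = K.edgeFinset.card := by
    unfold edgesIn
    rw [← Set.ncard_coe_finset]
    congr 1
    ext e
    induction e using Sym2.ind with | _ a b =>
    simp [K]
  rw [h1, ← h, ← Finset.sum_subset (Finset.subset_univ S)]
  · apply Finset.sum_congr rfl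
    intro x hx
    rw [← SimpleGraph.card_neighborFinset_eq_degree]
    congr 1
    ext y
    simp [K, hx, and_comm]
  · intro x _ hx
    rw [← SimpleGraph.card_neighborFinset_eq_degree, Finset.card_eq_zero]
    ext y
    simp [K, hx]

theorem dg_split {V : Type*} [Fintype V] [DecidableEq V] (G : SimpleGraph V)
    [DecidableRel G.Adj] (hcubic : ∀ v : V, G.degree v = 3) (S T : Finset V)
    (hST : Disjoint S T) (x : V) :
    (S.filter (G.Adj x)).card + (T.filter (G.Adj x)).card ≤ 3 := by
  rw [← card_union_of_disjoint (disjoint_filter_filter hST), ← hcubic x,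
    ← SimpleGraph.card_neighborFinset_eq_degree]
  apply card_le_card
  intro y; simp; tauto

theorem cnt {V : Type*} [Fintype V] [DecidableEq V] (G : SimpleGraph V)
    [DecidableRel G.Adj] (hcubic : ∀ v : V, G.degree v = 3) (R U : Finset V) (hU : U ⊆ R)
    (hW : ∀ v ∉ R, 2 ≤ (Rᶜ.filter (G.Adj v)).card) (C : Finset (Finset V))
    (h1 : ∀ A ∈ C, Odd A.card ∧ A ⊆ R \ U ∧ ∀ x ∈ A, ∀ y ∈ R \ U, G.Adj x y → y ∈ A)
    (h2 : ∀ A ∈ C, ∀ B ∈ C, A ≠ B → Disjoint A B) :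
    4 * C.card ≤ Fintype.card V + 2 * U.card := by
  classical
  set Z := (R \ U)ᶜ with hZ
  have hA : ∀ A ∈ C, 4 ≤ ∑ x ∈ A, (1 + (Z.filter (G.Adj x)).card) := by
    intro A hA
    obtain ⟨ho, hs, hc⟩ := h1 A hA
    have h3 : ∀ x ∈ A, (A.filter (G.Adj x)).card + (Z.filter (G.Adj x)).card = 3 := by
      intro x hx
      have hd : Disjoint A Z := by
        rw [Finset.disjoint_left]; intro y hy hy'
        simp only [hZ, mem_compl] at hy'
        exact hy' (hs hy)
      rw [← card_union_of_disjoint (disjoint_filter_filter hd), ← hcubic x,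
        ← SimpleGraph.card_neighborFinset_eq_degree]
      congr 1
      ext y
      simp only [mem_union, mem_filter, SimpleGraph.mem_neighborFinset]
      constructor
      · tauto
      · intro h
        by_cases hy : y ∈ R \ U
        · exact Or.inl ⟨hc x hx y hy h, h⟩
        · exact Or.inr ⟨by simpa only [hZ, mem_compl] using hy, h⟩
    have h4 : 2 * edgesIn G A + ∑ x ∈ A, (Z.filter (G.Adj x)).card = 3 * A.card := by
      rw [two_edgesIn, ← sum_add_distrib, sum_congr rfl h3]
      simp [mul_comm]
    rw [sum_add_distrib]
    simp only [sum_const, smul_eq_mul, mul_one]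
    rw [Nat.odd_iff] at ho
    by_cases h5 : A.card = 1
    · obtain ⟨a, rfl⟩ := card_eq_one.1 h5
      have := h3 a (by simp)
      have h6 : (({a} : Finset V).filter (G.Adj a)).card = 0 := by
        rw [card_eq_zero]; ext y; simp; rintro rfl; exact G.loopless.irrefl _
      simp
      omega
    · omega
  have hsum : 4 * C.card ≤ ∑ x ∈ R \ U, (1 + (Z.filter (G.Adj x)).card) := by
    calc 4 * C.card = ∑ A ∈ C, 4 := by simp [mul_comm]
      _ ≤ ∑ A ∈ C, ∑ x ∈ A, (1 + (Z.filter (G.Adj x)).card) := sum_le_sum hA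
      _ = ∑ x ∈ C.biUnion id, (1 + (Z.filter (G.Adj x)).card) := by
          rw [sum_biUnion]; · rfl
          intro A hA B hB hAB
          exact h2 A hA B hB hAB
      _ ≤ _ := by
          apply sum_le_sum_of_subset
          intro x hx
          simp only [mem_biUnion, id] at hx
          obtain ⟨A, hA, hx⟩ := hx
          exact (h1 A hA).2.1 hx
  have hdc : ∑ x ∈ R \ U, (Z.filter (G.Adj x)).card = ∑ z ∈ Z, ((R \ U).filter (G.Adj z)).card := by
    have := sum_card_bipartiteAbove_eq_sum_card_bipartiteBelow (s := R \ U) (t := Z) G.Adj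
    simp only [bipartiteAbove, bipartiteBelow] at this
    rw [this]
    simp only [G.adj_comm]
  have hZU : Z = U ∪ Rᶜ := by
    ext x; simp [hZ]; have := @hU x; tauto
  have hdj : Disjoint U Rᶜ := by
    rw [Finset.disjoint_left]; intro x hx; simpa using hU hx
  have hb1 : ∑ z ∈ U, ((R \ U).filter (G.Adj z)).card ≤ ∑ z ∈ U, 3 := by
    apply sum_le_sum
    intro z _
    have := dg_split G hcubic (R \ U) ∅ (by simp) z
    omega
  have hb2 : ∑ z ∈ Rᶜ, ((R \ U).filter (G.Adj z)).card ≤ ∑ z ∈ Rᶜ, 1 := by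
    apply sum_le_sum
    intro z hz
    have := dg_split G hcubic (R \ U) Rᶜ (by
      rw [Finset.disjoint_left]; intro x hx; simp at hx ⊢; exact hx.1) z
    have := hW z (by simpa using hz)
    omega
  rw [sum_add_distrib, hdc, hZU, sum_union hdj] at hsum
  simp only [sum_const, smul_eq_mul, mul_one] at hsum hb1 hb2
  have := card_sdiff_add_card_eq_card hU
  have := card_add_card_compl R
  omega

theorem matchR {V : Type*} [Fintype V] [DecidableEq V] (G : SimpleGraph V)
    [DecidableRel G.Adj] (hcubic : ∀ v : V, G.degree v = 3) (R : Finset V)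
    (hW : ∀ v ∉ R, 2 ≤ (Rᶜ.filter (G.Adj v)).card) :
    ∃ (S : Finset V) (f : V → V), S ⊆ R ∧ (∀ x ∈ S, f x ∈ S ∧ f (f x) = x ∧ G.Adj x (f x)) ∧
      4 * R.card ≤ 4 * S.card + Fintype.card V := by
  classical
  rcases isEmpty_or_nonempty V with hV | ⟨⟨v0⟩⟩
  · exact ⟨∅, id, by simp, by simp, by simp [Finset.eq_empty_of_isEmpty R]⟩
  have hn4 : 4 ≤ Fintype.card V := by
    have := G.degree_lt_card_verts v0
    rw [hcubic] at this; omega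
  obtain ⟨k, hk, hpar⟩ : ∃ k, (k = Fintype.card V / 4 ∨ k + 1 = Fintype.card V / 4) ∧
      Even (R.card + k) := by
    by_cases h : Even (R.card + Fintype.card V / 4)
    · exact ⟨_, Or.inl rfl, h⟩
    · refine ⟨Fintype.card V / 4 - 1, Or.inr (by omega), ?_⟩
      rw [Nat.even_iff] at h ⊢
      omega
  have := tb (X := {x // x ∈ R}) (G.induce {x | x ∈ R}) k (by simpa using hpar) (by
    intro U C h1 h2
    let e : {x // x ∈ R} ↪ V := Function.Embedding.subtype _
    have := cnt G hcubic R (U.map e) (by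
      intro x; simp [e]; tauto) hW (C.map (Finset.mapEmbedding e).toEmbedding) (by
        intro A hA
        simp only [mem_map, RelEmbedding.coe_toEmbedding, mapEmbedding_apply] at hA
        obtain ⟨A, hA, rfl⟩ := hA
        obtain ⟨ho, hd, hc⟩ := h1 A hA
        refine ⟨by simpa using ho, ?_, ?_⟩
        · intro x hx
          simp only [mem_map, mem_sdiff] at hx ⊢
          obtain ⟨a, ha, rfl⟩ := hx
          refine ⟨a.2, ?_⟩
          rintro ⟨b, hb, hab⟩
          have := e.injective hab
          subst this
          exact Finset.disjoint_left.1 hd ha hb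
        · intro x hx y hy hxy
          simp only [mem_map, mem_sdiff] at hx hy ⊢
          obtain ⟨a, ha, rfl⟩ := hx
          refine ⟨⟨y, hy.1⟩, hc a ha ⟨y, hy.1⟩ (fun h => hy.2 ⟨_, h, rfl⟩) hxy, rfl⟩) (by
        intro A hA B hB hAB
        simp only [mem_map, RelEmbedding.coe_toEmbedding, mapEmbedding_apply] at hA hB
        obtain ⟨A, hA, rfl⟩ := hA
        obtain ⟨B, hB, rfl⟩ := hB
        rw [disjoint_map]
        exact h2 A hA B hB (fun h => hAB (by rw [h])))
    simp only [card_map] at this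
    omega)
  obtain ⟨S, f, hf, hS⟩ := this
  obtain ⟨F, hF⟩ : ∃ F : V → V, ∀ b : {x // x ∈ R}, F b.1 = (f b).1 :=
    ⟨fun x => if h : x ∈ R then (f ⟨x, h⟩).1 else x, fun b => by simp⟩
  refine ⟨S.map (Function.Embedding.subtype _), F, ?_, ?_, ?_⟩
  · intro x; simp; tauto
  · intro x hx
    simp only [mem_map] at hx
    obtain ⟨a, ha, rfl⟩ := hx
    obtain ⟨h1, h2, h3⟩ := hf a ha
    simp only [Function.Embedding.coe_subtype, hF, h2]
    exact ⟨by simpa using h1, trivial, h3⟩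
  · simp only [card_map]
    simp at hS
    omega

theorem mantel_in {V : Type*} [Fintype V] [DecidableEq V] (G : SimpleGraph V)
    [DecidableRel G.Adj] (S : Finset V)
    (h : ∀ x ∈ S, ∀ y ∈ S, ∀ z ∈ S, G.Adj x y → G.Adj y z → ¬ G.Adj x z) :
    4 * edgesIn G S ≤ S.card ^ 2 := by
  classical
  have h2 := two_edgesIn G S
  set d : V → ℕ := fun x => (S.filter (G.Adj x)).card with hd
  have h3 : ∀ x ∈ S, ∀ y ∈ S.filter (G.Adj x), d x + d y ≤ S.card := by
    intro x hx y hy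
    rw [mem_filter] at hy
    rw [hd]
    simp only
    rw [← card_union_of_disjoint]
    · apply card_le_card
      intro z; simp; tauto
    · rw [Finset.disjoint_left]
      intro z hz hz'
      rw [mem_filter] at hz hz'
      exact h x hx y hy.1 z hz.1 hy.2 hz'.2 hz.2
  have h4 : ∑ x ∈ S, ∑ y ∈ S.filter (G.Adj x), (d x + d y) ≤
      ∑ x ∈ S, ∑ y ∈ S.filter (G.Adj x), S.card :=
    sum_le_sum (fun x hx => sum_le_sum (h3 x hx))
  have h5 : ∑ x ∈ S, ∑ y ∈ S.filter (G.Adj x), d y = ∑ x ∈ S, ∑ y ∈ S.filter (G.Adj x), d x := by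
    apply sum_comm'
    intro x y
    simp only [mem_filter, G.adj_comm]
    tauto
  simp only [sum_add_distrib] at h4
  rw [h5] at h4
  simp only [sum_const, smul_eq_mul, ← sum_mul] at h4
  have h6 := sq_sum_le_card_mul_sum_sq (s := S) (f := d)
  have h7 : ∑ x ∈ S, (S.filter (G.Adj x)).card * d x = ∑ x ∈ S, d x ^ 2 := by
    apply sum_congr rfl; intro x _; rw [sq]
  rw [h7] at h4
  change 2 * edgesIn G S = ∑ x ∈ S, d x at h2
  change _ ≤ (∑ x ∈ S, d x) * S.card at h4
  rw [← h2] at h4 h6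
  by_contra hlt
  push Not at hlt
  have hpos : 0 < edgesIn G S := by
    rcases Nat.eq_zero_or_pos (edgesIn G S) with h0 | h0
    · rw [h0] at hlt; simp at hlt
    · exact h0
  nlinarith [Nat.mul_le_mul_left S.card h4, Nat.mul_lt_mul_of_pos_left hlt hpos]

theorem part_bound {V : Type*} [Fintype V] [DecidableEq V] (G : SimpleGraph V)
    [DecidableRel G.Adj] (hcubic : ∀ v : V, G.degree v = 3)
    (hK4 : ¬ ∃ S : Finset V, IsK4Component G S) (S : Finset V) (hS : S.Nonempty) :
    density G S ≤ (S.card : ℚ) / 4 ∨ ((∃ x ∈ S, ∃ y ∈ S, ∃ z ∈ S, G.Adj x y ∧ G.Adj y z ∧ G.Adj x z)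
      ∧ density G S ≤ (S.card : ℚ) / 4 + 1 / 3) := by
  classical
  have hpos : (0 : ℚ) < S.card := by exact_mod_cast hS.card_pos
  by_cases ht : ∃ x ∈ S, ∃ y ∈ S, ∃ z ∈ S, G.Adj x y ∧ G.Adj y z ∧ G.Adj x z
  · right
    refine ⟨ht, ?_⟩
    unfold density
    rw [div_le_iff₀ hpos]
    have h2 := two_edgesIn G S
    have hd3 : ∀ x ∈ S, (S.filter (G.Adj x)).card ≤ 3 := by
      intro x _
      have := dg_split G hcubic S ∅ (by simp) x
      omega
    have hd1 : ∀ x ∈ S, (S.filter (G.Adj x)).card ≤ S.card - 1 := by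
      intro x hx
      rw [← card_erase_of_mem hx]
      apply card_le_card
      intro y; simp only [mem_filter, mem_erase]
      exact fun h => ⟨h.2.ne', h.1⟩
    have e3 := sum_le_sum hd3
    have e1 := sum_le_sum hd1
    rw [← h2] at e3 e1
    simp only [sum_const, smul_eq_mul] at e3 e1
    have h4 : S.card = 4 → edgesIn G S ≤ 5 := by
      intro h4
      by_contra hlt
      push Not at hlt
      have hall : ∀ x ∈ S, (S.filter (G.Adj x)).card = 3 := by
        have := (sum_eq_sum_iff_of_le hd3).1 (by
          rw [← h2]; simp only [sum_const, smul_eq_mul]; omega)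
        exact this
      apply hK4
      refine ⟨S, h4, ?_, ?_⟩
      · intro u hu v hv huv
        have hsub : S.filter (G.Adj u) ⊆ S.erase u := by
          intro y; simp only [mem_filter, mem_erase]
          exact fun h => ⟨h.2.ne', h.1⟩
        have := eq_of_subset_of_card_le hsub (by
          rw [hall u hu, card_erase_of_mem hu]; omega)
        have hv' : v ∈ S.erase u := mem_erase.2 ⟨huv.symm, hv⟩
        rw [← this] at hv'
        exact (mem_filter.1 hv').2
      · intro u hu v huv
        have hsub : S.filter (G.Adj u) ⊆ G.neighborFinset u := by
          intro y; simp
        have := eq_of_subset_of_card_le hsub (by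
          rw [hall u hu, SimpleGraph.card_neighborFinset_eq_degree, hcubic])
        have hv' : v ∈ G.neighborFinset u := by simpa using huv
        rw [← this] at hv'
        exact (mem_filter.1 hv').1
    rcases lt_or_ge S.card 5 with h | h
    · have hc := hS.card_pos
      have : (S.card = 1 ∧ edgesIn G S = 0) ∨ (S.card = 2 ∧ edgesIn G S ≤ 1) ∨
          (S.card = 3 ∧ edgesIn G S ≤ 3) ∨ (S.card = 4 ∧ edgesIn G S ≤ 5) := by
        generalize edgesIn G S = e at *
        generalize S.card = s at *
        interval_cases s <;> omega
      rcases this with ⟨a, b⟩ | ⟨a, b⟩ | ⟨a, b⟩ | ⟨a, b⟩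
      · rw [a, b]; norm_num
      all_goals
        rw [a]
        have b' : (edgesIn G S : ℚ) ≤ _ := Nat.cast_le.2 b
        push_cast at b'
        norm_num
        linarith
    · have e3' : (2 * edgesIn G S : ℚ) ≤ S.card * 3 := by exact_mod_cast e3
      have h' : (5 : ℚ) ≤ S.card := by exact_mod_cast h
      nlinarith
  · left
    push Not at ht
    have := mantel_in G S (fun x hx y hy z hz => ht x hx y hy z hz)
    have h' : (4 * edgesIn G S : ℚ) ≤ (S.card : ℚ) ^ 2 := by exact_mod_cast this
    unfold density
    rw [div_le_iff₀ hpos]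
    linarith

theorem diamond_iff {V : Type*} [Fintype V] [DecidableEq V] (G : SimpleGraph V) (S : Finset V) :
    (S.card = 4 ∧ Nonempty (G.induce (S : Set V) ≃g diamondGraph)) ↔
    ∃ a b c e, S = {a, b, c, e} ∧ a ≠ b ∧ ¬ G.Adj a b ∧ G.Adj a c ∧ G.Adj a e ∧ G.Adj b c ∧
      G.Adj b e ∧ G.Adj c e := by
  constructor
  · rintro ⟨h4, ⟨φ⟩⟩
    have hadj : ∀ i j, G.Adj (φ.symm i).1 (φ.symm j).1 ↔ diamondGraph.Adj i j := by
      intro i j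
      exact φ.symm.map_rel_iff
    refine ⟨φ.symm 0, φ.symm 1, φ.symm 2, φ.symm 3, ?_, ?_, ?_, ?_, ?_, ?_, ?_, ?_⟩
    · ext x
      simp only [mem_insert, mem_singleton]
      constructor
      · intro hx
        have h := φ.symm_apply_apply ⟨x, hx⟩
        generalize φ ⟨x, hx⟩ = i at h
        have h' : x = (φ.symm i).1 := by rw [h]
        fin_cases i <;> simp at h' <;> tauto
      · rintro (h | h | h | h) <;> rw [h] <;> exact (φ.symm _).2
    · intro h
      have := φ.symm.injective (Subtype.ext h)
      simp at this
    all_goals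
      rw [hadj]
      simp [diamondGraph]
  · rintro ⟨a, b, c, e, rfl, hab, nab, ac, ae, bc, be, ce⟩
    have hc : ({a, b, c, e} : Finset V).card = 4 := by
      have := ac.ne; have := ae.ne; have := bc.ne; have := be.ne; have := ce.ne
      rw [card_insert_of_notMem, card_insert_of_notMem, card_insert_of_notMem, card_singleton] <;>
        simp [*]
    refine ⟨hc, ⟨?_⟩⟩
    let g : Fin 4 → (({a, b, c, e} : Finset V) : Set V) :=
      ![⟨a, by simp⟩, ⟨b, by simp⟩, ⟨c, by simp⟩, ⟨e, by simp⟩]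
    have hg : Function.Bijective g := by
      apply Function.Surjective.bijective_of_nat_card_le
      · rintro ⟨x, hx⟩
        simp only [coe_insert, coe_singleton, Set.mem_insert_iff, Set.mem_singleton_iff] at hx
        rcases hx with rfl | rfl | rfl | rfl
        exacts [⟨0, rfl⟩, ⟨1, rfl⟩, ⟨2, rfl⟩, ⟨3, rfl⟩]
      · rw [Nat.card_coe_set_eq, Set.ncard_coe_finset, hc]; simp
    refine (RelIso.symm ⟨Equiv.ofBijective g hg, ?_⟩)
    intro i j
    fin_cases i <;> fin_cases j <;>
      simp [g, diamondGraph, nab, ac, ae, bc, be, ce, ac.symm, ae.symm, bc.symm, be.symm, ce.symm,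
        G.adj_comm b a]

theorem nb4 {V : Type*} [Fintype V] [DecidableEq V] (G : SimpleGraph V)
    [DecidableRel G.Adj] (hcubic : ∀ v : V, G.degree v = 3) {v a b c d : V}
    (ha : G.Adj v a) (hb : G.Adj v b) (hc : G.Adj v c) (hd : G.Adj v d) :
    a = b ∨ a = c ∨ a = d ∨ b = c ∨ b = d ∨ c = d := by
  by_contra h
  push Not at h
  have h4 : ({a, b, c, d} : Finset V).card = 4 := by
    rw [card_insert_of_notMem, card_insert_of_notMem, card_insert_of_notMem, card_singleton] <;>
      simp [*]
  have : ({a, b, c, d} : Finset V).card ≤ (G.neighborFinset v).card := by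
    apply card_le_card
    intro x; simp; rintro (rfl | rfl | rfl | rfl) <;> assumption
  rw [SimpleGraph.card_neighborFinset_eq_degree, hcubic] at this
  omega

theorem two_le_filter {V : Type*} [DecidableEq V] (G : SimpleGraph V)
    [DecidableRel G.Adj] (X : Finset V) {v p q : V} (hp : p ∈ X) (hq : q ∈ X)
    (hvp : G.Adj v p) (hvq : G.Adj v q) (hpq : p ≠ q) : 2 ≤ (X.filter (G.Adj v)).card := by
  rw [← card_pair hpq]
  apply card_le_card
  intro x; simp only [mem_insert, mem_singleton, mem_filter]
  rintro (rfl | rfl) <;> tauto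

theorem diamond_props {V : Type*} [Fintype V] [DecidableEq V] (G : SimpleGraph V)
    [DecidableRel G.Adj] (hcubic : ∀ v : V, G.degree v = 3) {S : Finset V}
    (hS : S.card = 4 ∧ Nonempty (G.induce (S : Set V) ≃g diamondGraph)) :
    ∃ c e, c ∈ S ∧ e ∈ S ∧ c ≠ e ∧ (∀ y, G.Adj c y → y ∈ S) ∧ (∀ y, G.Adj e y → y ∈ S) ∧
      (∀ v ∈ S, v ≠ c → G.Adj v c) ∧ (∀ v ∈ S, v ≠ e → G.Adj v e) := by
  obtain ⟨a, b, c, e, rfl, hab, nab, ac, ae, bc, be, ce⟩ := (diamond_iff G S).1 hS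
  have := ac.ne; have := ae.ne; have := bc.ne; have := be.ne; have := ce.ne
  refine ⟨c, e, by simp, by simp, ce.ne, ?_, ?_, ?_, ?_⟩
  · intro y hy
    have := nb4 G hcubic ac.symm bc.symm ce hy
    simp only [mem_insert, mem_singleton]
    grind
  · intro y hy
    have := nb4 G hcubic ae.symm be.symm ce.symm hy
    simp only [mem_insert, mem_singleton]
    grind
  · simp only [mem_insert, mem_singleton]
    rintro v (rfl | rfl | rfl | rfl) h
    exacts [ac, bc, absurd rfl h, ce.symm]
  · simp only [mem_insert, mem_singleton]
    rintro v (rfl | rfl | rfl | rfl) h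
    exacts [ae, be, ce, absurd rfl h]

theorem diamond_two {V : Type*} [Fintype V] [DecidableEq V] (G : SimpleGraph V)
    [DecidableRel G.Adj] (hcubic : ∀ v : V, G.degree v = 3) {S : Finset V}
    (hS : S.card = 4 ∧ Nonempty (G.induce (S : Set V) ≃g diamondGraph)) {v : V} (hv : v ∈ S) :
    ∃ p ∈ S, ∃ q ∈ S, p ≠ q ∧ G.Adj v p ∧ G.Adj v q := by
  obtain ⟨a, b, c, e, rfl, hab, nab, ac, ae, bc, be, ce⟩ := (diamond_iff G S).1 hS
  simp only [mem_insert, mem_singleton] at hv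
  rcases hv with rfl | rfl | rfl | rfl
  · exact ⟨c, by simp, e, by simp, ce.ne, ac, ae⟩
  · exact ⟨c, by simp, e, by simp, ce.ne, bc, be⟩
  · exact ⟨a, by simp, b, by simp, hab, ac.symm, bc.symm⟩
  · exact ⟨a, by simp, b, by simp, hab, ae.symm, be.symm⟩

theorem tri_two {V : Type*} [Fintype V] [DecidableEq V] (G : SimpleGraph V)
    {S : Finset V} (hS : S.card = 3 ∧ (∀ u ∈ S, ∀ v ∈ S, u ≠ v → G.Adj u v)) {v : V} (hv : v ∈ S) :
    ∃ p ∈ S, ∃ q ∈ S, p ≠ q ∧ G.Adj v p ∧ G.Adj v q ∧ S = {v, p, q} := by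
  have h2 : (S.erase v).card = 2 := by rw [card_erase_of_mem hv, hS.1]
  obtain ⟨p, q, hpq, h⟩ := card_eq_two.1 h2
  have hp : p ∈ S.erase v := by rw [h]; simp
  have hq : q ∈ S.erase v := by rw [h]; simp
  rw [mem_erase] at hp hq
  refine ⟨p, hp.2, q, hq.2, hpq, hS.2 v hv p hp.2 hp.1.symm, hS.2 v hv q hq.2 hq.1.symm, ?_⟩
  rw [← h, insert_erase hv]

theorem center_mem {V : Type*} [Fintype V] [DecidableEq V] (G : SimpleGraph V)
    [DecidableRel G.Adj] (hcubic : ∀ v : V, G.degree v = 3) {S X : Finset V}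
    (hS : S.card = 4 ∧ Nonempty (G.induce (S : Set V) ≃g diamondGraph)) {v : V} (hv : v ∈ S)
    (hvX : v ∈ X) (hX : ∃ p ∈ X, ∃ q ∈ X, p ≠ q ∧ G.Adj v p ∧ G.Adj v q) :
    ∃ c e, c ∈ S ∧ e ∈ S ∧ c ≠ e ∧ c ∈ X ∧ (∀ y, G.Adj c y → y ∈ S) ∧ (∀ y, G.Adj e y → y ∈ S) ∧
      (∀ v ∈ S, v ≠ c → G.Adj v c) ∧ (∀ v ∈ S, v ≠ e → G.Adj v e) := by
  obtain ⟨c, e, hc, he, hce, h1, h2, h3, h4⟩ := diamond_props G hcubic hS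
  by_cases hcX : c ∈ X
  · exact ⟨c, e, hc, he, hce, hcX, h1, h2, h3, h4⟩
  by_cases heX : e ∈ X
  · exact ⟨e, c, he, hc, hce.symm, heX, h2, h1, h4, h3⟩
  exfalso
  obtain ⟨p, hp, q, hq, hpq, vp, vq⟩ := hX
  have := nb4 G hcubic vp vq (h3 v hv (fun h => hcX (h ▸ hvX))) (h4 v hv (fun h => heX (h ▸ hvX)))
  grind

theorem dd_eq {V : Type*} [Fintype V] [DecidableEq V] (G : SimpleGraph V)
    [DecidableRel G.Adj] (hcubic : ∀ v : V, G.degree v = 3) {S X : Finset V}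
    (hS : S.card = 4 ∧ Nonempty (G.induce (S : Set V) ≃g diamondGraph))
    (hX : X.card = 4 ∧ Nonempty (G.induce (X : Set V) ≃g diamondGraph))
    {v : V} (hv : v ∈ S) (hvX : v ∈ X) : S = X := by
  obtain ⟨c, e, hc, he, hce, hcX, h1, h2, h3, h4⟩ :=
    center_mem G hcubic hS hv hvX (diamond_two G hcubic hX hvX)
  obtain ⟨c', e', hc', he', hce', k1, k2, k3, k4⟩ := diamond_props G hcubic hX
  have fin : S ⊆ X → S = X := fun h => eq_of_subset_of_card_le h (by rw [hS.1, hX.1])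
  have sub : ∀ z, z ∈ S → (∀ y ∈ S, y ≠ z → G.Adj y z) → (z = c' ∨ z = e') → S ⊆ X := by
    intro z hz hz1 hz2 y hy
    by_cases hyz : y = z
    · rcases hz2 with h | h <;> rw [hyz, h] <;> assumption
    · have := (hz1 y hy hyz).symm
      rcases hz2 with rfl | rfl
      · exact k1 _ this
      · exact k2 _ this
  apply fin
  by_cases a1 : c = c' ∨ c = e'
  · exact sub c hc h3 a1
  by_cases a2 : e = c' ∨ e = e'
  · exact sub e he h4 a2
  push Not at a1 a2
  have cc' := k3 c hcX a1.1
  have ce' := k4 c hcX a1.2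
  have hc'S := h1 _ cc'
  have he'S := h1 _ ce'
  have heX : e ∈ X := k1 _ (h4 c' hc'S a2.1.symm)
  have hsub : ({c, e, c', e'} : Finset V) ⊆ S := by
    intro y; simp only [mem_insert, mem_singleton]; rintro (rfl | rfl | rfl | rfl) <;> assumption
  have h4c : ({c, e, c', e'} : Finset V).card = 4 := by
    rw [card_insert_of_notMem, card_insert_of_notMem, card_insert_of_notMem, card_singleton] <;>
      simp [*]
  rw [← eq_of_subset_of_card_le hsub (by rw [h4c, hS.1])]
  intro y; simp only [mem_insert, mem_singleton]; rintro (rfl | rfl | rfl | rfl) <;> assumption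

theorem dt_sub {V : Type*} [Fintype V] [DecidableEq V] (G : SimpleGraph V)
    [DecidableRel G.Adj] (hcubic : ∀ v : V, G.degree v = 3) {S X : Finset V}
    (hS : S.card = 4 ∧ Nonempty (G.induce (S : Set V) ≃g diamondGraph))
    (hX : X.card = 3 ∧ (∀ u ∈ X, ∀ v ∈ X, u ≠ v → G.Adj u v))
    {v : V} (hv : v ∈ S) (hvX : v ∈ X) : X ⊆ S := by
  obtain ⟨p, hp, q, hq, hpq, vp, vq, -⟩ := tri_two G hX hvX
  obtain ⟨c, e, hc, he, hce, hcX, h1, h2, h3, h4⟩ :=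
    center_mem G hcubic hS hv hvX ⟨p, hp, q, hq, hpq, vp, vq⟩
  intro y hy
  by_cases h : c = y
  · rwa [← h]
  · exact h1 y (hX.2 c hcX y hy h)

theorem tt_eq {V : Type*} [Fintype V] [DecidableEq V] (G : SimpleGraph V)
    [DecidableRel G.Adj] (hcubic : ∀ v : V, G.degree v = 3)
    (hK4 : ¬ ∃ S : Finset V, IsK4Component G S) {X Y : Finset V}
    (hX : X.card = 3 ∧ (∀ u ∈ X, ∀ v ∈ X, u ≠ v → G.Adj u v))
    (hY : Y.card = 3 ∧ (∀ u ∈ Y, ∀ v ∈ Y, u ≠ v → G.Adj u v))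
    (hXD : ∀ S : Finset V, (S.card = 4 ∧ Nonempty (G.induce (S : Set V) ≃g diamondGraph)) → ¬ X ⊆ S)
    {v : V} (hvX : v ∈ X) (hvY : v ∈ Y) : X = Y := by
  have key : ∀ w x y, X = {v, w, x} → Y = {v, w, y} → G.Adj v w → G.Adj v x → G.Adj v y →
      w ≠ x → w ≠ y → X = Y := by
    intro w x y hXe hYe vw vx vy wx wy
    have awx : G.Adj w x := hX.2 w (by simp [hXe]) x (by simp [hXe]) wx
    have awy : G.Adj w y := hY.2 w (by simp [hYe]) y (by simp [hYe]) wy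
    by_cases hxy : x = y
    · rw [hXe, hYe, hxy]
    exfalso
    by_cases axy : G.Adj x y
    · apply hK4
      have := vw.ne; have := vx.ne; have := vy.ne
      refine ⟨{v, w, x, y}, ?_, ?_, ?_⟩
      · rw [card_insert_of_notMem, card_insert_of_notMem, card_insert_of_notMem, card_singleton] <;>
          simp [*]
      · simp only [mem_insert, mem_singleton]
        have := vw.symm; have := vx.symm; have := vy.symm; have := awx.symm
        have := awy.symm; have := axy.symm
        rintro a (rfl | rfl | rfl | rfl) b (rfl | rfl | rfl | rfl) hab <;>
          first | assumption | exact absurd rfl hab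
      · simp only [mem_insert, mem_singleton]
        rintro a (rfl | rfl | rfl | rfl) b hab
        · have := nb4 G hcubic vw vx vy hab; grind
        · have := nb4 G hcubic vw.symm awx awy hab; grind
        · have := nb4 G hcubic vx.symm awx.symm axy hab; grind
        · have := nb4 G hcubic vy.symm awy.symm axy.symm hab; grind
    · refine hXD {x, y, v, w} ((diamond_iff G _).2 ⟨x, y, v, w, rfl, hxy, axy, vx.symm, awx.symm,
        vy.symm, awy.symm, vw⟩) ?_
      rw [hXe]
      intro z; simp only [mem_insert, mem_singleton]; tauto
  obtain ⟨p, hp, q, hq, hpq, vp, vq, hXe⟩ := tri_two G hX hvX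
  obtain ⟨r, hr, s, hs, hrs, vr, vs, hYe⟩ := tri_two G hY hvY
  have hXe' : X = {v, q, p} := by rw [hXe, pair_comm]
  have hYe' : Y = {v, s, r} := by rw [hYe, pair_comm]
  rcases nb4 G hcubic vp vq vr vs with h | h | h | h | h | h
  · exact absurd h hpq
  · subst h; exact key p q s hXe hYe vp vq vs hpq hrs
  · subst h; exact key p q r hXe hYe' vp vq vr hpq hrs.symm
  · subst h; exact key q p s hXe' hYe vq vp vs hpq.symm hrs
  · subst h; exact key q p r hXe' hYe' vq vp vr hpq.symm hrs.symm
  · exact absurd h hrs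

theorem dens_diamond {V : Type*} [Fintype V] [DecidableEq V] (G : SimpleGraph V)
    [DecidableRel G.Adj] {S : Finset V}
    (hS : S.card = 4 ∧ Nonempty (G.induce (S : Set V) ≃g diamondGraph)) :
    5 / 4 ≤ density G S := by
  have h4 := hS.1
  obtain ⟨a, b, c, e, hSe, hab, nab, ac, ae, bc, be, ce⟩ := (diamond_iff G S).1 hS
  have h2 := two_edgesIn G S
  have haS : a ∈ S := by simp [hSe]
  have hbS : b ∈ S := by simp [hSe]
  have hcS : c ∈ S := by simp [hSe]
  have heS : e ∈ S := by simp [hSe]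
  have h3 : ∀ v p q r, p ∈ S → q ∈ S → r ∈ S → G.Adj v p → G.Adj v q → G.Adj v r → p ≠ q → p ≠ r →
      q ≠ r → 3 ≤ (S.filter (G.Adj v)).card := by
    intro v p q r hp hq hr vp vq vr pq pr qr
    rw [← show ({p, q, r} : Finset V).card = 3 from card_eq_three.2 ⟨p, q, r, pq, pr, qr, rfl⟩]
    apply card_le_card
    intro x; simp only [mem_insert, mem_singleton, mem_filter]
    rintro (rfl | rfl | rfl) <;> tauto
  have da := two_le_filter G S hcS heS ac ae ce.ne
  have db := two_le_filter G S hcS heS bc be ce.ne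
  have dc := h3 c a b e haS hbS heS ac.symm bc.symm ce hab ae.ne be.ne
  have de := h3 e a b c haS hbS hcS ae.symm be.symm ce.symm hab ac.ne bc.ne
  have hs : ∑ x ∈ S, (S.filter (G.Adj x)).card = (S.filter (G.Adj a)).card +
      ((S.filter (G.Adj b)).card + ((S.filter (G.Adj c)).card + (S.filter (G.Adj e)).card)) := by
    have := ac.ne; have := ae.ne; have := bc.ne; have := be.ne; have := ce.ne
    generalize hF : (fun x => (S.filter (G.Adj x)).card) = F
    have hF' : ∀ x, (S.filter (G.Adj x)).card = F x := fun x => by rw [← hF]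
    simp only [hF']
    rw [hSe, sum_insert, sum_insert, sum_insert, sum_singleton] <;> simp [*]
  have h5 : 5 ≤ edgesIn G S := by omega
  have h5' : (5 : ℚ) ≤ edgesIn G S := by exact_mod_cast h5
  unfold density
  rw [h4]
  push_cast
  linarith

theorem dens_tri {V : Type*} [Fintype V] [DecidableEq V] (G : SimpleGraph V)
    [DecidableRel G.Adj] {S : Finset V}
    (hS : S.card = 3 ∧ (∀ u ∈ S, ∀ v ∈ S, u ≠ v → G.Adj u v)) :
    1 ≤ density G S := by
  have h2 := two_edgesIn G S
  have h3 : ∑ x ∈ S, 2 ≤ ∑ x ∈ S, (S.filter (G.Adj x)).card := by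
    apply sum_le_sum
    intro v hv
    obtain ⟨p, hp, q, hq, hpq, vp, vq, -⟩ := tri_two G hS hv
    exact two_le_filter G S hp hq vp vq hpq
  rw [← h2] at h3
  simp only [sum_const, smul_eq_mul, hS.1] at h3
  have h5 : 3 ≤ edgesIn G S := by omega
  have h5' : (3 : ℚ) ≤ edgesIn G S := by exact_mod_cast h5
  unfold density
  rw [hS.1]
  push_cast
  linarith

theorem dens_edge {V : Type*} [Fintype V] [DecidableEq V] (G : SimpleGraph V)
    [DecidableRel G.Adj] {x y : V} (h : G.Adj x y) :
    1 / 2 ≤ density G {x, y} := by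
  have h2 := two_edgesIn G {x, y}
  rw [sum_pair h.ne] at h2
  have h3 : 1 ≤ (({x, y} : Finset V).filter (G.Adj x)).card :=
    card_pos.2 ⟨y, by simp [h]⟩
  have h4 : 1 ≤ (({x, y} : Finset V).filter (G.Adj y)).card :=
    card_pos.2 ⟨x, by simp [h.symm]⟩
  have h5 : 1 ≤ edgesIn G {x, y} := by omega
  have h5' : (1 : ℚ) ≤ edgesIn G {x, y} := by exact_mod_cast h5
  unfold density
  rw [card_pair h.ne]
  push_cast
  linarith

theorem density_nonneg {V : Type*} (G : SimpleGraph V) (S : Finset V) : 0 ≤ density G S := by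
  unfold density; positivity

theorem exists_part {V : Type*} [Fintype V] [DecidableEq V] (G : SimpleGraph V)
    (F : Finset (Finset V)) (hne : ∅ ∉ F) (hF : ∀ A ∈ F, ∀ B ∈ F, A ≠ B → Disjoint A B) :
    ∃ P : Finpartition (univ : Finset V), ∑ p ∈ F, density G p ≤ partDensity G P := by
  let P0 := Finpartition.ofPairwiseDisjoint F (fun A hA B hB hAB => hF A hA B hB hAB)
  refine ⟨P0.extendOfLE (subset_univ _), ?_⟩
  unfold partDensity
  apply sum_le_sum_of_subset_of_nonneg
  · refine Subset.trans ?_ (P0.parts_subset_extendOfLE _)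
    intro A hA
    simp only [P0, Finpartition.ofPairwiseDisjoint, mem_erase]
    exact ⟨fun h => hne (by rw [← bot_eq_empty, ← h]; exact hA), hA⟩
  · intro i _ _; exact density_nonneg G i

theorem stmt10 {V : Type*} [Fintype V] [DecidableEq V] (G : SimpleGraph V) [DecidableRel G.Adj]
    (n : ℕ) (hn : Fintype.card V = n)
    (hcubic : ∀ v : V, G.degree v = 3)
    (hK4 : ¬ ∃ S : Finset V, IsK4Component G S)
    (D T : Set (Finset V))
    (hD : D = {S : Finset V | S.card = 4 ∧ Nonempty (G.induce (S : Set V) ≃g diamondGraph)})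
    (hT : T = {S : Finset V | S.card = 3 ∧ (∀ u ∈ S, ∀ v ∈ S, u ≠ v → G.Adj u v) ∧
      ∀ S' ∈ D, ¬ S ⊆ S'}) :
    ∃ P : Finpartition (univ : Finset V),
      (5 / 4) * (D.ncard : ℚ) + (T.ncard : ℚ) +
          (1 / 4) * ((n : ℚ) - 3 * (T.ncard : ℚ) - 4 * (D.ncard : ℚ) - (n : ℚ) / 4) ≤
        partDensity G P ∧
      ∀ Q : Finpartition (univ : Finset V), partDensity G Q ≤ (4 / 3) * partDensity G P := by
  classical
  have hDm : ∀ S, S ∈ D ↔ (S.card = 4 ∧ Nonempty (G.induce (S : Set V) ≃g diamondGraph)) := by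
    intro S; rw [hD]; rfl
  have hTm : ∀ S, S ∈ T ↔ (S.card = 3 ∧ (∀ u ∈ S, ∀ v ∈ S, u ≠ v → G.Adj u v) ∧
      ∀ S' ∈ D, ¬ S ⊆ S') := by
    intro S; rw [hT]; rfl
  clear hD hT
  obtain ⟨Df, rfl⟩ : ∃ Df : Finset (Finset V), D = ↑Df := ⟨D.toFinite.toFinset, by simp⟩
  obtain ⟨Tf, rfl⟩ : ∃ Tf : Finset (Finset V), T = ↑Tf := ⟨T.toFinite.toFinset, by simp⟩
  simp only [Set.ncard_coe_finset, mem_coe] at *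
  have hDT : Disjoint Df Tf := by
    rw [Finset.disjoint_left]; intro A hA hB
    have h1 := ((hDm A).1 hA).1
    have h2 := ((hTm A).1 hB).1
    omega
  have hF0 : ∀ A ∈ Df ∪ Tf, ∀ B ∈ Df ∪ Tf, A ≠ B → Disjoint A B := by
    intro A hA B hB hAB
    rw [Finset.disjoint_left]
    intro v hvA hvB
    apply hAB
    rw [mem_union] at hA hB
    rcases hA with hA | hA <;> rcases hB with hB | hB
    · exact dd_eq G hcubic ((hDm A).1 hA) ((hDm B).1 hB) hvA hvB
    · have hB' := (hTm B).1 hB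
      exact absurd (dt_sub G hcubic ((hDm A).1 hA) ⟨hB'.1, hB'.2.1⟩ hvA hvB) (hB'.2.2 A hA)
    · have hB' := (hTm A).1 hA
      exact absurd (dt_sub G hcubic ((hDm B).1 hB) ⟨hB'.1, hB'.2.1⟩ hvB hvA) (hB'.2.2 B hB)
    · have hA' := (hTm A).1 hA
      have hB' := (hTm B).1 hB
      exact tt_eq G hcubic hK4 ⟨hA'.1, hA'.2.1⟩ ⟨hB'.1, hB'.2.1⟩
        (fun S hS => hA'.2.2 S ((hDm S).2 hS)) hvA hvB
  set W := (Df ∪ Tf).biUnion id with hWdef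
  have hWcard : W.card = 4 * Df.card + 3 * Tf.card := by
    rw [hWdef, card_biUnion (t := id) hF0, sum_union hDT,
      sum_congr rfl (fun A hA => (show (id A : Finset V).card = 4 from ((hDm A).1 hA).1)),
      sum_congr rfl (fun A hA => (show (id A : Finset V).card = 3 from ((hTm A).1 hA).1))]
    simp [mul_comm]
  obtain ⟨S, f, hSR, hf, hSc⟩ := matchR G hcubic Wᶜ (by
    intro v hv
    rw [compl_compl]
    have hv' : v ∈ W := by simpa using hv
    rw [hWdef, mem_biUnion] at hv'
    obtain ⟨A, hA, hvA⟩ := hv'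
    have hAW : A ⊆ W := fun x hx => mem_biUnion.2 ⟨A, hA, hx⟩
    have : ∃ p ∈ A, ∃ q ∈ A, p ≠ q ∧ G.Adj v p ∧ G.Adj v q := by
      rcases mem_union.1 hA with h | h
      · exact diamond_two G hcubic ((hDm A).1 h) hvA
      · have h' := (hTm A).1 h
        obtain ⟨p, hp, q, hq, hpq, vp, vq, -⟩ := tri_two G ⟨h'.1, h'.2.1⟩ hvA
        exact ⟨p, hp, q, hq, hpq, vp, vq⟩
    obtain ⟨p, hp, q, hq, hpq, vp, vq⟩ := this
    exact two_le_filter G W (hAW hp) (hAW hq) vp vq hpq)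
  set Mf := S.image (fun x => ({x, f x} : Finset V)) with hMf
  have hMc : ∀ A ∈ Mf, A.card = 2 := by
    intro A hA
    rw [hMf, mem_image] at hA
    obtain ⟨x, hx, rfl⟩ := hA
    exact card_pair (hf x hx).2.2.ne
  have hMS : ∀ A ∈ Mf, A ⊆ S := by
    intro A hA
    rw [hMf, mem_image] at hA
    obtain ⟨x, hx, rfl⟩ := hA
    intro y; simp only [mem_insert, mem_singleton]
    rintro (rfl | rfl)
    exacts [hx, (hf x hx).1]
  have hMd : ∀ A ∈ Mf, ∀ B ∈ Mf, A ≠ B → Disjoint A B := by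
    intro A hA B hB hAB
    rw [hMf, mem_image] at hA hB
    obtain ⟨x, hx, rfl⟩ := hA
    obtain ⟨y, hy, rfl⟩ := hB
    rw [Finset.disjoint_left]
    intro z hz hz'
    apply hAB
    have hx2 := (hf x hx).2.1
    have hy2 := (hf y hy).2.1
    simp only [mem_insert, mem_singleton] at hz hz'
    rcases hz with rfl | rfl <;> rcases hz' with h | h
    · rw [h]
    · rw [h, hy2, pair_comm]
    · rw [← h, hx2, pair_comm]
    · rw [h] at hx2; rw [← hx2, hy2]
  have hMcard : S.card = 2 * Mf.card := by
    have hb : Mf.biUnion id = S := by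
      ext x
      rw [mem_biUnion]
      constructor
      · rintro ⟨A, hA, hx⟩; exact hMS A hA hx
      · intro hx
        exact ⟨{x, f x}, mem_image.2 ⟨x, hx, rfl⟩, by simp⟩
    rw [← hb, card_biUnion (t := id) hMd, sum_congr rfl (fun A hA => (show (id A : Finset V).card = 2 from hMc A hA))]
    simp [mul_comm]
  have hMF : Disjoint (Df ∪ Tf) Mf := by
    rw [Finset.disjoint_left]; intro A hA hB
    have h2 := hMc A hB
    rcases mem_union.1 hA with h | h
    · have h1 := ((hDm A).1 h).1
      omega
    · have h1 := ((hTm A).1 h).1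
      omega
  have hcross : ∀ A ∈ Df ∪ Tf, ∀ B ∈ Mf, Disjoint A B := by
    intro A hA B hB
    rw [Finset.disjoint_left]
    intro x hxA hxB
    have := hSR (hMS B hB hxB)
    rw [mem_compl] at this
    exact this (mem_biUnion.2 ⟨A, hA, hxA⟩)
  obtain ⟨P, hP⟩ := exists_part G ((Df ∪ Tf) ∪ Mf) (by
    intro h
    rcases mem_union.1 h with h | h
    · rcases mem_union.1 h with h | h
      · have h1 := ((hDm _).1 h).1
        simp at h1
      · have h1 := ((hTm _).1 h).1
        simp at h1
    · have := hMc _ h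
      simp at this) (by
    intro A hA B hB hAB
    rcases mem_union.1 hA with hA | hA <;> rcases mem_union.1 hB with hB | hB
    · exact hF0 A hA B hB hAB
    · exact hcross A hA B hB
    · exact (hcross B hB A hA).symm
    · exact hMd A hA B hB hAB)
  have hlow : (5 / 4) * (Df.card : ℚ) + (Tf.card : ℚ) +
          (1 / 4) * ((n : ℚ) - 3 * (Tf.card : ℚ) - 4 * (Df.card : ℚ) - (n : ℚ) / 4) ≤
        partDensity G P := by
    refine le_trans ?_ hP
    rw [sum_union hMF, sum_union hDT]
    have s1 : ∑ p ∈ Df, (5 / 4 : ℚ) ≤ ∑ p ∈ Df, density G p :=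
      sum_le_sum (fun A hA => dens_diamond G ((hDm A).1 hA))
    have s2 : ∑ p ∈ Tf, (1 : ℚ) ≤ ∑ p ∈ Tf, density G p :=
      sum_le_sum (fun A hA => dens_tri G ⟨((hTm A).1 hA).1, ((hTm A).1 hA).2.1⟩)
    have s3 : ∑ p ∈ Mf, (1 / 2 : ℚ) ≤ ∑ p ∈ Mf, density G p := by
      apply sum_le_sum
      intro A hA
      rw [hMf, mem_image] at hA
      obtain ⟨x, hx, rfl⟩ := hA
      exact dens_edge G (hf x hx).2.2
    simp only [sum_const, nsmul_eq_mul] at s1 s2 s3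
    have hcc := card_add_card_compl W
    have c1 : 4 * n ≤ 16 * Df.card + 12 * Tf.card + 8 * Mf.card + n := by omega
    have c2 : (4 * n : ℚ) ≤ 16 * Df.card + 12 * Tf.card + 8 * Mf.card + n := by exact_mod_cast c1
    linarith
  refine ⟨P, hlow, ?_⟩
  intro Q
  set tri : Finset V → Prop := fun p =>
    ∃ x ∈ p, ∃ y ∈ p, ∃ z ∈ p, G.Adj x y ∧ G.Adj y z ∧ G.Adj x z with htri
  have hex : ∀ p, tri p → ∃ X ∈ Df ∪ Tf, X.card < 2 * (X ∩ p).card := by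
    rintro p ⟨x, hx, y, hy, z, hz, xy, yz, xz⟩
    have t3 : ({x, y, z} : Finset V).card = 3 :=
      card_eq_three.2 ⟨x, y, z, xy.ne, xz.ne, yz.ne, rfl⟩
    have tp : ({x, y, z} : Finset V) ⊆ p := by
      intro w; simp only [mem_insert, mem_singleton]; rintro (rfl | rfl | rfl) <;> assumption
    by_cases h : ∃ S' ∈ Df, ({x, y, z} : Finset V) ⊆ S'
    · obtain ⟨X, hX, htX⟩ := h
      refine ⟨X, mem_union_left _ hX, ?_⟩
      have h1 := card_le_card (subset_inter htX tp)
      have h2 := ((hDm X).1 hX).1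
      omega
    · push Not at h
      refine ⟨{x, y, z}, mem_union_right _ ((hTm _).2 ⟨t3, ?_, h⟩), ?_⟩
      · have := xy.symm; have := yz.symm; have := xz.symm
        simp only [mem_insert, mem_singleton]
        rintro a (rfl | rfl | rfl) b (rfl | rfl | rfl) hab <;>
          first | assumption | exact absurd rfl hab
      · rw [inter_eq_left.2 tp]; omega
  choose! X hX1 hX2 using hex
  have hcardE : (Q.parts.filter tri).card ≤ (Df ∪ Tf).card := by
    apply card_le_card_of_injOn X
    · intro p hp
      exact hX1 p (mem_filter.1 hp).2
    · intro p hp q hq hpq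
      have hp' := mem_filter.1 hp
      have hq' := mem_filter.1 hq
      by_contra hne
      have hdis : Disjoint p q := Q.disjoint hp'.1 hq'.1 hne
      have a1 := hX2 p hp'.2
      have a2 := hX2 q hq'.2
      rw [← hpq] at a2
      have a3 : (X p ∩ p).card + (X p ∩ q).card ≤ (X p).card := by
        rw [← card_union_of_disjoint (hdis.mono inter_subset_right inter_subset_right)]
        exact card_le_card (union_subset inter_subset_left inter_subset_left)
      omega
  rw [card_union_of_disjoint hDT] at hcardE
  have hup : partDensity G Q ≤ ∑ p ∈ Q.parts, ((p.card : ℚ) / 4 + if tri p then (1 / 3 : ℚ) else 0) := by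
    unfold partDensity
    apply sum_le_sum
    intro p hp
    rcases part_bound G hcubic hK4 p (Q.nonempty_of_mem_parts hp) with h | ⟨h1, h2⟩
    · split_ifs <;> linarith
    · rw [if_pos h1]; exact h2
  rw [sum_add_distrib, ← sum_div, ← Nat.cast_sum, Q.sum_card_parts, card_univ, hn,
    ← sum_filter, sum_const, nsmul_eq_mul] at hup
  have hE' : ((Q.parts.filter tri).card : ℚ) ≤ Df.card + Tf.card := by exact_mod_cast hcardE
  linarith
end

section
/- Let G = (V,E) be a graph on n ≥ 2 vertices with minimum degree δ(G) ≥ n−3 that is not complete, and let H be the complement of G (so H has maximum degree at most 2, at least one edge, and is a disjoint union of paths and cycles). Let o be the number of components of H that are odd cycles, let p_o be the number of components of H that are paths on an odd number (at least 3) of vertices, let d_{n−1} be the number of isolated vertices of H (equivalently, vertices of degree n−1 in G), and set n_2 = (n + d_{n−1} + p_o + o)/2. Then every partition of V into two nonempty parts has density at most (n−2)/2 − o/n_2, and there exists a partition of V into two nonempty parts with density exactly (n−2)/2 − o/n_2. -/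
open Finset

open Classical in
noncomputable def mm {V : Type*} (H : SimpleGraph V) (S T : Finset V) : ℕ :=
  ∑ v ∈ S, ∑ w ∈ T, if H.Adj v w then 1 else 0

theorem mm_comm {V : Type*} (H : SimpleGraph V) (S T : Finset V) : mm H S T = mm H T S := by
  unfold mm
  rw [Finset.sum_comm]
  refine Finset.sum_congr rfl fun v _ => Finset.sum_congr rfl fun w _ => ?_
  by_cases h : H.Adj v w
  · simp [h, h.symm]
  · have h' : ¬ H.Adj w v := fun h' => h h'.symm
    simp [h, h']

theorem mm_union_left {V : Type*} [DecidableEq V] (H : SimpleGraph V) (S T U : Finset V)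
    (h : Disjoint S T) : mm H (S ∪ T) U = mm H S U + mm H T U := by
  unfold mm
  rw [Finset.sum_union h]

theorem mm_union_right {V : Type*} [DecidableEq V] (H : SimpleGraph V) (S T U : Finset V)
    (h : Disjoint S T) : mm H U (S ∪ T) = mm H U S + mm H U T := by
  rw [mm_comm, mm_union_left _ _ _ _ h, mm_comm, mm_comm H T]

theorem mm_mono {V : Type*} {H T : SimpleGraph V} (h : T ≤ H) (A B : Finset V) :
    mm T A B ≤ mm H A B := by
  unfold mm
  refine Finset.sum_le_sum fun v _ => Finset.sum_le_sum fun w _ => ?_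
  have := @h v w
  split_ifs <;> simp_all

theorem mm_eq_zero {V : Type*} {H : SimpleGraph V} (A B : Finset V)
    (h : ∀ a ∈ A, ∀ b ∈ B, ¬ H.Adj a b) : mm H A B = 0 := by
  unfold mm
  refine Finset.sum_eq_zero fun v hv => Finset.sum_eq_zero fun w hw => ?_
  simp [h v hv w hw]

theorem mm_univ {V : Type*} [Fintype V] (H : SimpleGraph V) [DecidableRel H.Adj] (S : Finset V) :
    mm H S univ = ∑ v ∈ S, H.degree v := by
  unfold mm
  refine Finset.sum_congr rfl fun v _ => ?_
  rw [← SimpleGraph.card_neighborFinset_eq_degree, Finset.card_eq_sum_ones]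
  rw [← Finset.sum_subset (Finset.subset_univ (H.neighborFinset v))]
  · refine Finset.sum_congr rfl fun w hw => ?_
    simp at hw
    simp [hw]
  · intro w _ hw
    simp at hw
    simp [hw]

theorem two_edgesIn_s14 {V : Type*} [Fintype V] (H : SimpleGraph V) (S : Finset V) :
    mm H S S = 2 * edgesIn H S := by
  classical
  let H' : SimpleGraph V := 
    { Adj := fun v w => H.Adj v w ∧ v ∈ S ∧ w ∈ S
      symm := ⟨fun v w h => ⟨h.1.symm, h.2.2, h.2.1⟩⟩
      loopless := ⟨fun v h => H.loopless.irrefl v h.1⟩ }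
  have h1 := H'.sum_degrees_eq_twice_card_edges
  rw [← mm_univ] at h1
  have h2 : edgesIn H S = #H'.edgeFinset := by
    unfold edgesIn
    rw [← Set.ncard_coe_finset]
    congr 1
    ext e
    induction e using Sym2.ind with
    | _ x y => simp [H']
  rw [h2, ← h1]
  unfold mm
  rw [← Finset.sum_subset (Finset.subset_univ S)]
  · refine Finset.sum_congr rfl fun v hv => ?_
    rw [← Finset.sum_subset (Finset.subset_univ S)]
    · refine Finset.sum_congr rfl fun w hw => ?_
      simp [H', hv, hw]
    · intro w _ hw; simp [H', hw]
  · intro w _ hw; simp [H', hw]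

theorem mm_compl {V : Type*} [Fintype V] [DecidableEq V] (G : SimpleGraph V) (S : Finset V) :
    mm G S S + mm Gᶜ S S + #S = #S * #S := by
  have h2 : #S = ∑ v ∈ S, (∑ w ∈ S, if v = w then 1 else 0) := by
    rw [Finset.card_eq_sum_ones]
    refine Finset.sum_congr rfl fun v hv => ?_
    simp [hv]
  have h3 : #S * #S = ∑ v ∈ S, ∑ w ∈ S, 1 := by simp
  rw [h3]
  conv_lhs => rw [h2]
  unfold mm
  rw [← Finset.sum_add_distrib, ← Finset.sum_add_distrib]
  refine Finset.sum_congr rfl fun v _ => ?_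
  rw [← Finset.sum_add_distrib, ← Finset.sum_add_distrib]
  refine Finset.sum_congr rfl fun w _ => ?_
  by_cases h : v = w
  · subst h; simp
  · by_cases h' : G.Adj v w <;> simp [h, h']

theorem density_eq {V : Type*} [Fintype V] [DecidableEq V] (G : SimpleGraph V) (S : Finset V)
    (hS : S.Nonempty) : density G S = ((#S : ℚ) - 1) / 2 - edgesIn Gᶜ S / #S := by
  have h := mm_compl G S
  rw [two_edgesIn_s14, two_edgesIn_s14] at h
  have h' : (2 * edgesIn G S + 2 * edgesIn Gᶜ S + #S : ℚ) = #S * #S := by exact_mod_cast h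
  have : (#S : ℚ) ≠ 0 := by simp [hS.ne_empty]
  unfold density
  field_simp
  linarith

theorem tree_cut {W : Type*} [Fintype W] (H : SimpleGraph W) (hc : H.Connected) :
    ∃ A B : Finset W, Disjoint A B ∧ (∀ x, x ∈ A ∨ x ∈ B) ∧ Fintype.card W ≤ mm H A B + 1 := by
  classical
  obtain ⟨T, hT, ht⟩ := hc.exists_isTree_le
  have h1 := ht.card_edgeFinset
  obtain ⟨c⟩ : T.Colorable 2 := ht.isAcyclic.isBipartite
  have hdis : Disjoint (univ.filter (fun x => c x = 0)) (univ.filter (fun x => c x = 1)) := by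
    rw [Finset.disjoint_left]; intro x hx hy; simp at hx hy; simp [hx] at hy
  have hu : (univ.filter (fun x => c x = 0)) ∪ (univ.filter (fun x => c x = 1)) = univ := by
    ext x; simp; omega
  refine ⟨univ.filter (fun x => c x = 0), univ.filter (fun x => c x = 1), hdis, ?_, ?_⟩
  · intro x
    have := Finset.mem_univ x
    rwa [← hu, Finset.mem_union] at this
  have h2 := T.sum_degrees_eq_twice_card_edges
  rw [← mm_univ, ← hu, mm_union_left _ _ _ _ hdis, mm_union_right _ _ _ _ hdis,
    mm_union_right _ _ _ _ hdis, mm_eq_zero (H := T) (univ.filter (fun x => c x = 0)) (univ.filter (fun x => c x = 0)),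
    mm_eq_zero (H := T) (univ.filter (fun x => c x = 1)) (univ.filter (fun x => c x = 1)), mm_comm T (univ.filter (fun x => c x = 1))] at h2
  · have := mm_mono hT (univ.filter (fun x => c x = 0)) (univ.filter (fun x => c x = 1))
    omega
  all_goals
    intro a ha b hb hab
    simp at ha hb
    exact c.valid hab (by rw [ha, hb])

section
set_option linter.unusedSectionVars false
variable {V : Type*} [Fintype V] [DecidableEq V] (H : SimpleGraph V)

open Classical in
noncomputable def kf (K : H.ConnectedComponent) : Finset V :=
  univ.filter (fun v => H.connectedComponentMk v = K)

theorem mem_kf (K : H.ConnectedComponent) (v : V) : v ∈ kf H K ↔ H.connectedComponentMk v = K := by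
  simp [kf]

theorem kf_card (K : H.ConnectedComponent) : K.supp.ncard = #(kf H K) := by
  rw [← Set.ncard_coe_finset]; congr 1; ext v; simp [kf]

theorem mm_map {W : Type*} (H' : SimpleGraph W) (f : W ↪ V) (hf : ∀ a b, H.Adj (f a) (f b) ↔ H'.Adj a b) (A B : Finset W) :
    mm H (A.map f) (B.map f) = mm H' A B := by
  unfold mm; simp only [Finset.sum_map]
  refine Finset.sum_congr rfl fun v _ => Finset.sum_congr rfl fun w _ => ?_
  by_cases h : H'.Adj v w
  · simp [h, (hf v w).2 h]
  · have h' : ¬ H.Adj (f v) (f w) := fun h' => h ((hf v w).1 h')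
    simp [h, h']

theorem comp_cut (K : H.ConnectedComponent) :
    ∃ A B : Finset V, Disjoint A B ∧ A ∪ B = kf H K ∧ #(kf H K) ≤ mm H A B + 1 := by
  classical
  obtain ⟨A, B, h1, h2, h3⟩ := tree_cut K.toSimpleGraph K.connected_toSimpleGraph
  refine ⟨A.map (Function.Embedding.subtype _), B.map (Function.Embedding.subtype _), ?_, ?_, ?_⟩
  · simpa using h1
  · ext x
    simp only [mem_union, mem_map, mem_kf]
    constructor
    · rintro (⟨a, _, rfl⟩ | ⟨a, _, rfl⟩) <;> exact a.2
    · intro hx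
      rcases h2 ⟨x, hx⟩ with h | h
      · exact Or.inl ⟨_, h, rfl⟩
      · exact Or.inr ⟨_, h, rfl⟩
  · rw [mm_map H K.toSimpleGraph]
    · rw [← kf_card]
      convert h3 using 1
      rw [Set.ncard_eq_toFinset_card', Set.toFinset_card]
      exact Fintype.card_congr (Equiv.refl _)
    · intro a b; rfl

theorem sum_comp [Fintype H.ConnectedComponent] (S : Finset V) (f : V → ℕ) :
    ∑ v ∈ S, f v = ∑ K : H.ConnectedComponent, ∑ v ∈ S ∩ kf H K, f v := by
  classical
  rw [← Finset.sum_fiberwise S H.connectedComponentMk f]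
  refine Finset.sum_congr rfl fun K _ => Finset.sum_congr ?_ fun _ _ => rfl
  ext; simp [mem_kf]

theorem mm_kf (K : H.ConnectedComponent) (S : Finset V) (T : Finset V) :
    mm H (S ∩ kf H K) T = mm H (S ∩ kf H K) (T ∩ kf H K) := by
  unfold mm
  refine Finset.sum_congr rfl fun v hv => ?_
  symm
  apply Finset.sum_subset (Finset.inter_subset_left)
  intro x hx hx'
  simp only [mem_inter, mem_kf] at hx' hv
  rw [if_neg]
  intro hab
  exact hx' ⟨hx, hv.2 ▸ (SimpleGraph.ConnectedComponent.sound hab.reachable).symm⟩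

theorem edgesIn_sum [Fintype H.ConnectedComponent] (S : Finset V) :
    edgesIn H S = ∑ K : H.ConnectedComponent, edgesIn H (S ∩ kf H K) := by
  have : 2 * edgesIn H S = 2 * ∑ K : H.ConnectedComponent, edgesIn H (S ∩ kf H K) := by
    rw [Finset.mul_sum, ← two_edgesIn_s14]
    conv_lhs => unfold mm
    rw [sum_comp H]
    refine Finset.sum_congr rfl fun K _ => ?_
    rw [← two_edgesIn_s14, ← mm_kf]; rfl
  omega

/-- number of isolated vertices in the component -/
noncomputable def iso [DecidableRel H.Adj] (K : H.ConnectedComponent) : ℕ :=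
  #((kf H K).filter (fun v => H.degree v = 0))

open Classical in
noncomputable def opi [DecidableRel H.Adj] (K : H.ConnectedComponent) : ℕ :=
  if Odd K.supp.ncard ∧ 3 ≤ K.supp.ncard ∧ ∃ v ∈ K.supp, H.degree v = 1 then 1 else 0

open Classical in
noncomputable def oci [DecidableRel H.Adj] (K : H.ConnectedComponent) : ℕ :=
  if (∀ v ∈ K.supp, H.degree v = 2) ∧ Odd K.supp.ncard then 1 else 0

theorem kf_inter (K : H.ConnectedComponent) (S : Finset V) (h : S ⊆ kf H K) :
    S ∩ kf H K = S := Finset.inter_eq_left.2 h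

/-- the numerical dichotomy -/
theorem comp_dich [DecidableRel H.Adj] (hdeg : ∀ v, H.degree v ≤ 2) (K : H.ConnectedComponent) :
    ((∀ v ∈ kf H K, H.degree v = 2) ∧ iso H K + opi H K = 0 ∧ oci H K = #(kf H K) % 2) ∨
    (∑ v ∈ kf H K, H.degree v + 2 = 2 * #(kf H K) ∧ iso H K + opi H K = #(kf H K) % 2
      ∧ oci H K = 0) := by
  classical
  have hmem : ∀ v, v ∈ K.supp ↔ v ∈ kf H K := fun v => by simp [mem_kf]
  by_cases hc : ∀ v ∈ kf H K, H.degree v = 2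
  · left
    refine ⟨hc, ?_, ?_⟩
    · have h1 : iso H K = 0 := by
        simp only [iso, Finset.card_eq_zero, Finset.filter_eq_empty_iff]
        intro v hv; rw [hc v hv]; simp
      have h2 : opi H K = 0 := by
        unfold opi
        rw [if_neg]
        rintro ⟨_, _, v, hv, h⟩
        rw [hc v ((hmem v).1 hv)] at h; simp at h
      omega
    · unfold oci
      simp only [hmem, kf_card]
      by_cases ho : Odd #(kf H K)
      · rw [if_pos ⟨hc, ho⟩]; rw [Nat.odd_iff] at ho; omega
      · rw [if_neg (fun h => ho h.2)]; rw [Nat.odd_iff] at ho; omega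
  · right
    have hoc : oci H K = 0 := by
      unfold oci
      rw [if_neg]
      rintro ⟨h, _⟩
      exact hc fun v hv => h v ((hmem v).2 hv)
    obtain ⟨A, B, hAB, hu, hcut⟩ := comp_cut H K
    have hD : ∑ v ∈ kf H K, H.degree v = mm H (kf H K) (kf H K) := by
      rw [← mm_univ]
      have := mm_kf H K univ univ
      simpa using this
    have hD2 : mm H (kf H K) (kf H K) = mm H A A + 2 * mm H A B + mm H B B := by
      rw [← hu, mm_union_left _ _ _ _ hAB, mm_union_right _ _ _ _ hAB, mm_union_right _ _ _ _ hAB,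
        mm_comm H B A]; ring
    have e0 := two_edgesIn_s14 H (kf H K)
    push Not at hc
    obtain ⟨v, hv, hv2⟩ := hc
    have hlt : ∑ v ∈ kf H K, H.degree v < ∑ v ∈ kf H K, 2 :=
      Finset.sum_lt_sum (fun i _ => hdeg i) ⟨v, hv, lt_of_le_of_ne (hdeg v) hv2⟩
    simp only [Finset.sum_const, smul_eq_mul] at hlt
    have hDk : ∑ v ∈ kf H K, H.degree v + 2 = 2 * #(kf H K) := by omega
    refine ⟨hDk, ?_, hoc⟩
    by_cases hz : ∃ u ∈ kf H K, H.degree u = 0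
    · obtain ⟨u, hu, hu0⟩ := hz
      have hs : kf H K = {u} := by
        ext w
        simp only [Finset.mem_singleton]
        constructor
        · intro hw
          rw [mem_kf] at hw hu
          have hr : H.Reachable u w := SimpleGraph.ConnectedComponent.exact (hu.trans hw.symm)
          obtain ⟨p⟩ := hr
          cases p with
          | nil => rfl
          | cons h p =>
            exfalso
            have : 0 < H.degree u := (H.degree_pos_iff_exists_adj u).2 ⟨_, h⟩
            omega
        · rintro rfl; exact hu
      have h1 : iso H K = 1 := by
        unfold iso; rw [hs, Finset.filter_singleton, if_pos hu0]; rfl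
      have h2 : opi H K = 0 := by
        unfold opi
        rw [if_neg]
        rintro ⟨_, h, _⟩
        rw [kf_card, hs] at h; simp at h
      rw [h1, h2, hs]; rfl
    · push Not at hz
      have h1 : iso H K = 0 := by
        simp only [iso, Finset.card_eq_zero, Finset.filter_eq_empty_iff]
        intro v hv; exact hz v hv
      have hv1 : H.degree v = 1 := by
        have := hdeg v
        have := hz v hv
        omega
      have hk : 2 ≤ #(kf H K) := by
        have : H.degree v ≤ ∑ v ∈ kf H K, H.degree v :=
          Finset.single_le_sum (f := fun v => H.degree v) (fun _ _ => Nat.zero_le _) hv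
        omega
      rw [h1, zero_add]
      unfold opi
      rw [kf_card]
      by_cases ho : Odd #(kf H K)
      · have ho' := Nat.odd_iff.1 ho
        rw [if_pos ⟨ho, by omega, v, (hmem v).2 hv, hv1⟩]; omega
      · rw [if_neg (fun h => ho h.1)]; rw [Nat.odd_iff] at ho; omega

theorem comp_count [DecidableRel H.Adj] (hdeg : ∀ v, H.degree v ≤ 2) (K : H.ConnectedComponent)
    (S T : Finset V) (hST : Disjoint S T) (hu : S ∪ T = kf H K) :
    #S + #T = #(kf H K) ∧
    ∃ dS dT, dS + dT = ∑ v ∈ kf H K, H.degree v ∧ dS ≤ 2 * #S ∧ dT ≤ 2 * #T ∧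
      2 * edgesIn H S + mm H S T = dS ∧ 2 * edgesIn H T + mm H S T = dT ∧
      ((∀ v ∈ kf H K, H.degree v = 2) → dS = 2 * #S ∧ dT = 2 * #T) := by
  refine ⟨by rw [← hu, Finset.card_union_of_disjoint hST], ∑ v ∈ S, H.degree v,
    ∑ v ∈ T, H.degree v, ?_, ?_, ?_, ?_, ?_, ?_⟩
  · rw [← hu, Finset.sum_union hST]
  · calc _ ≤ ∑ v ∈ S, 2 := Finset.sum_le_sum fun i _ => hdeg i
      _ = _ := by simp [mul_comm]
  · calc _ ≤ ∑ v ∈ T, 2 := Finset.sum_le_sum fun i _ => hdeg i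
      _ = _ := by simp [mul_comm]
  · have h := mm_kf H K S univ
    rw [kf_inter H K S (hu ▸ Finset.subset_union_left), mm_univ, Finset.univ_inter, ← hu,
      mm_union_right _ _ _ _ hST, two_edgesIn_s14] at h
    exact h.symm
  · have h := mm_kf H K T univ
    rw [kf_inter H K T (hu ▸ Finset.subset_union_right), mm_univ, Finset.univ_inter, ← hu,
      mm_union_right _ _ _ _ hST, two_edgesIn_s14, mm_comm H T S] at h
    omega
  · intro hc
    constructor
    · rw [Finset.sum_congr rfl fun v hv => hc v (hu ▸ Finset.mem_union_left _ hv)]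
      simp [mul_comm]
    · rw [Finset.sum_congr rfl fun v hv => hc v (hu ▸ Finset.mem_union_right _ hv)]
      simp [mul_comm]

theorem comp_bound [DecidableRel H.Adj] (hdeg : ∀ v, H.degree v ≤ 2) (K : H.ConnectedComponent)
    (S T : Finset V) (hST : Disjoint S T) (hu : S ∪ T = kf H K) :
    2 * #S + oci H K ≤ #(kf H K) + iso H K + opi H K + 2 * edgesIn H S ∧
    oci H K ≤ edgesIn H S + edgesIn H T := by
  obtain ⟨h0, dS, dT, h1, h2, h3, h4, h5, h6⟩ := comp_count H hdeg K S T hST hu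
  rcases comp_dich H hdeg K with ⟨hc, h7, h8⟩ | ⟨hc, h7, h8⟩
  · obtain ⟨h9, h10⟩ := h6 hc
    omega
  · omega

theorem comp_exists [DecidableRel H.Adj] (hdeg : ∀ v, H.degree v ≤ 2) (K : H.ConnectedComponent) :
    ∃ S T : Finset V, Disjoint S T ∧ S ∪ T = kf H K ∧ edgesIn H S = oci H K ∧ edgesIn H T = 0 ∧
      2 * #S = #(kf H K) + iso H K + opi H K + oci H K ∧ (2 ≤ #(kf H K) → T ≠ ∅) := by
  obtain ⟨A, B, hAB, hu, hcut⟩ := comp_cut H K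
  suffices h : (edgesIn H A = oci H K ∧ edgesIn H B = 0 ∧
      2 * #A = #(kf H K) + iso H K + opi H K + oci H K ∧ (2 ≤ #(kf H K) → #B ≠ 0)) ∨
      (edgesIn H B = oci H K ∧ edgesIn H A = 0 ∧
      2 * #B = #(kf H K) + iso H K + opi H K + oci H K ∧ (2 ≤ #(kf H K) → #A ≠ 0)) by
    rcases h with ⟨h1, h2, h3, h4⟩ | ⟨h1, h2, h3, h4⟩
    · exact ⟨A, B, hAB, hu, h1, h2, h3, fun h => by simpa using h4 h⟩
    · exact ⟨B, A, hAB.symm, by rw [Finset.union_comm, hu], h1, h2, h3, fun h => by simpa using h4 h⟩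
  obtain ⟨h0, dS, dT, h1, h2, h3, h4, h5, h6⟩ := comp_count H hdeg K A B hAB hu
  rcases comp_dich H hdeg K with ⟨hc, h7, h8⟩ | ⟨hc, h7, h8⟩
  · obtain ⟨h9, h10⟩ := h6 hc
    have : edgesIn H A + edgesIn H B ≤ 1 := by omega
    omega
  · omega

end

theorem arith_bound (a b e f m o : ℚ) (ha : 0 < a) (hb : 0 < b) (ho : 0 ≤ o) (hm : 0 < m)
    (he : 0 ≤ e) (hf : 0 ≤ f) (hom : o ≤ m)
    (h1 : a ≤ m - o + e) (h2 : b ≤ m - o + f) (h3 : o ≤ e + f) :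
    o / m ≤ e / a + f / b := by
  have key : ∀ x y : ℚ, 0 < x → 0 ≤ y → o ≤ y → x ≤ m - o + y → o / m ≤ y / x := by
    intro x y hx hy hoy hxy
    rw [div_le_div_iff₀ hm hx]
    nlinarith [mul_nonneg ho hy, mul_nonneg (sub_nonneg.2 hom) (sub_nonneg.2 hoy),
      mul_le_mul_of_nonneg_left hxy ho]
  have hea : 0 ≤ e / a := by positivity
  have hfb : 0 ≤ f / b := by positivity
  by_cases h4 : o ≤ e
  · linarith [key a e ha he h4 h1]
  by_cases h5 : o ≤ f
  · linarith [key b f hb hf h5 h2]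
  push Not at h4 h5
  have h6 : e / m ≤ e / a := div_le_div_of_nonneg_left he ha (by linarith)
  have h7 : f / m ≤ f / b := div_le_div_of_nonneg_left hf hb (by linarith)
  have h8 : o / m ≤ (e + f) / m := div_le_div_of_nonneg_right h3 hm.le
  rw [add_div] at h8
  linarith

theorem stmt14 {V : Type*} [Fintype V] [DecidableEq V] (G : SimpleGraph V) [DecidableRel G.Adj]
    (n : ℕ) (hn : Fintype.card V = n) (hn2 : 2 ≤ n)
    (hδ : ∀ v : V, n ≤ G.degree v + 3)
    (hnotcomplete : G ≠ ⊤)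
    (o po dn1 : ℕ)
    (ho : o = Set.ncard {K : Gᶜ.ConnectedComponent |
      (∀ v ∈ K.supp, Gᶜ.degree v = 2) ∧ Odd K.supp.ncard})
    (hpo : po = Set.ncard {K : Gᶜ.ConnectedComponent |
      Odd K.supp.ncard ∧ 3 ≤ K.supp.ncard ∧ ∃ v ∈ K.supp, Gᶜ.degree v = 1})
    (hd : dn1 = Set.ncard {v : V | Gᶜ.degree v = 0}) :
    (∀ V₁ V₂ : Finset V, V₁.Nonempty → V₂.Nonempty → Disjoint V₁ V₂ → V₁ ∪ V₂ = univ →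
      density G V₁ + density G V₂ ≤
        ((n : ℚ) - 2) / 2 - (o : ℚ) / (((n : ℚ) + (dn1 : ℚ) + (po : ℚ) + (o : ℚ)) / 2)) ∧
    (∃ V₁ V₂ : Finset V, V₁.Nonempty ∧ V₂.Nonempty ∧ Disjoint V₁ V₂ ∧ V₁ ∪ V₂ = univ ∧
      density G V₁ + density G V₂ =
        ((n : ℚ) - 2) / 2 - (o : ℚ) / (((n : ℚ) + (dn1 : ℚ) + (po : ℚ) + (o : ℚ)) / 2)) := by
  classical
  have hdeg : ∀ v, Gᶜ.degree v ≤ 2 := by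
    intro v
    have h1 := G.degree_compl v
    have h2 := hδ v
    omega
  have ho' : o = ∑ K : Gᶜ.ConnectedComponent, oci Gᶜ K := by
    rw [ho, Set.ncard_eq_toFinset_card', Finset.card_eq_sum_ones]
    unfold oci
    rw [← Finset.sum_filter]
    refine Finset.sum_congr ?_ fun _ _ => rfl
    ext; simp
  have hpo' : po = ∑ K : Gᶜ.ConnectedComponent, opi Gᶜ K := by
    rw [hpo, Set.ncard_eq_toFinset_card', Finset.card_eq_sum_ones]
    unfold opi
    rw [← Finset.sum_filter]
    refine Finset.sum_congr ?_ fun _ _ => rfl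
    ext; simp
  have hcard : ∀ S : Finset V, #S = ∑ K : Gᶜ.ConnectedComponent, #(S ∩ kf Gᶜ K) := by
    intro S
    simp only [Finset.card_eq_sum_ones]
    exact sum_comp Gᶜ S _
  have hd' : dn1 = ∑ K : Gᶜ.ConnectedComponent, iso Gᶜ K := by
    rw [hd, Set.ncard_eq_toFinset_card', hcard]
    refine Finset.sum_congr rfl fun K _ => ?_
    unfold iso
    congr 1
    ext; simp [and_comm]
  have hn' : n = ∑ K : Gᶜ.ConnectedComponent, #(kf Gᶜ K) := by
    rw [← hn, ← Finset.card_univ, hcard]; simp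
  have hon : o ≤ n := by
    rw [ho', hn']
    refine Finset.sum_le_sum fun K _ => ?_
    obtain ⟨v, hv⟩ := K.nonempty_supp
    have : 0 < #(kf Gᶜ K) := Finset.card_pos.2 ⟨v, by rw [mem_kf]; exact hv⟩
    unfold oci
    split_ifs <;> omega
  have hnQ : (2 : ℚ) ≤ n := by exact_mod_cast hn2
  have honQ : (o : ℚ) ≤ n := by exact_mod_cast hon
  have hd0 : (0 : ℚ) ≤ dn1 := Nat.cast_nonneg _
  have hp0 : (0 : ℚ) ≤ po := Nat.cast_nonneg _
  have ho0 : (0 : ℚ) ≤ o := Nat.cast_nonneg _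
  have hsum : ∀ S T : Finset V, Disjoint S T → S ∪ T = univ → (#S + #T : ℚ) = n := by
    intro S T h1 h2
    have := Finset.card_union_of_disjoint h1
    rw [h2, Finset.card_univ, hn] at this
    exact_mod_cast this.symm
  have hloc : ∀ S T : Finset V, Disjoint S T → S ∪ T = univ → ∀ K : Gᶜ.ConnectedComponent,
      Disjoint (S ∩ kf Gᶜ K) (T ∩ kf Gᶜ K) ∧ (S ∩ kf Gᶜ K) ∪ (T ∩ kf Gᶜ K) = kf Gᶜ K := by
    intro S T h1 h2 K
    refine ⟨h1.mono Finset.inter_subset_left Finset.inter_subset_left, ?_⟩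
    rw [← Finset.union_inter_distrib_right, h2, Finset.univ_inter]
  have hb : ∀ S T : Finset V, Disjoint S T → S ∪ T = univ →
      2 * #S + o ≤ n + dn1 + po + 2 * edgesIn Gᶜ S ∧ o ≤ edgesIn Gᶜ S + edgesIn Gᶜ T := by
    intro S T h1 h2
    have h := fun K => comp_bound Gᶜ hdeg K _ _ (hloc S T h1 h2 K).1 (hloc S T h1 h2 K).2
    rw [hcard S, ho', hd', hpo', hn', edgesIn_sum Gᶜ S, edgesIn_sum Gᶜ T]
    simp only [Finset.mul_sum, ← Finset.sum_add_distrib]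
    exact ⟨Finset.sum_le_sum fun K _ => (h K).1, Finset.sum_le_sum fun K _ => (h K).2⟩
  constructor
  · intro S T hS hT hdis hu
    rw [density_eq G S hS, density_eq G T hT]
    have h1 := hb S T hdis hu
    have h2 := hb T S hdis.symm (by rw [Finset.union_comm, hu])
    have h11 : (2 * #S + o : ℚ) ≤ n + dn1 + po + 2 * edgesIn Gᶜ S := by exact_mod_cast h1.1
    have h12 : (o : ℚ) ≤ edgesIn Gᶜ S + edgesIn Gᶜ T := by exact_mod_cast h1.2
    have h21 : (2 * #T + o : ℚ) ≤ n + dn1 + po + 2 * edgesIn Gᶜ T := by exact_mod_cast h2.1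
    have h3 := hsum S T hdis hu
    have := arith_bound #S #T (edgesIn Gᶜ S) (edgesIn Gᶜ T)
      (((n : ℚ) + (dn1 : ℚ) + (po : ℚ) + (o : ℚ)) / 2) o
      (by exact_mod_cast hS.card_pos) (by exact_mod_cast hT.card_pos) ho0 (by linarith)
      (Nat.cast_nonneg _) (Nat.cast_nonneg _) (by linarith) (by linarith) (by linarith) h12
    linarith
  · choose S T h1 h2 h3 h4 h5 h6 using comp_exists Gᶜ hdeg
    let A : Finset V := univ.filter fun v => v ∈ S (Gᶜ.connectedComponentMk v)
    let B : Finset V := univ.filter fun v => v ∉ S (Gᶜ.connectedComponentMk v)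
    have hA : ∀ K, A ∩ kf Gᶜ K = S K := by
      intro K; ext v
      simp only [A, Finset.mem_inter, Finset.mem_filter, Finset.mem_univ, true_and, mem_kf]
      constructor
      · rintro ⟨h, rfl⟩; exact h
      · intro h
        have : v ∈ kf Gᶜ K := by rw [← h2 K]; exact Finset.mem_union_left _ h
        rw [mem_kf] at this
        subst this
        exact ⟨h, rfl⟩
    have hB : ∀ K, B ∩ kf Gᶜ K = T K := by
      intro K; ext v
      simp only [B, Finset.mem_inter, Finset.mem_filter, Finset.mem_univ, true_and, mem_kf]
      constructor
      · rintro ⟨h, rfl⟩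
        have hv : v ∈ kf Gᶜ (Gᶜ.connectedComponentMk v) := by rw [mem_kf]
        rw [← h2, Finset.mem_union] at hv
        exact hv.resolve_left h
      · intro h
        have : v ∈ kf Gᶜ K := by rw [← h2 K]; exact Finset.mem_union_right _ h
        rw [mem_kf] at this
        subst this
        exact ⟨fun h' => Finset.disjoint_left.1 (h1 _) h' h, rfl⟩
    have hdis : Disjoint A B := Finset.disjoint_filter_filter_not _ _ _
    have hu : A ∪ B = univ := Finset.filter_union_filter_not_eq _ _
    have eA : edgesIn Gᶜ A = o := by
      rw [edgesIn_sum, ho']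
      exact Finset.sum_congr rfl fun K _ => by rw [hA, h3]
    have eB : edgesIn Gᶜ B = 0 := by
      rw [edgesIn_sum]
      exact Finset.sum_eq_zero fun K _ => by rw [hB, h4]
    have cA : 2 * #A = n + dn1 + po + o := by
      rw [hcard A, ho', hd', hpo', hn']
      simp only [Finset.mul_sum, ← Finset.sum_add_distrib]
      exact Finset.sum_congr rfl fun K _ => by rw [hA, h5]
    have neA : A.Nonempty := Finset.card_pos.1 (by omega)
    have neB : B.Nonempty := by
      obtain ⟨v, w, hvw⟩ : ∃ v w, Gᶜ.Adj v w := by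
        by_contra hno
        push Not at hno
        apply hnotcomplete
        rw [eq_top_iff]
        intro v w hvw
        have := hno v w
        rw [SimpleGraph.compl_adj] at this
        by_contra h
        exact this ⟨hvw.ne, h⟩
      have hk : 2 ≤ #(kf Gᶜ (Gᶜ.connectedComponentMk v)) := by
        have : 1 < #(kf Gᶜ (Gᶜ.connectedComponentMk v)) := by
          rw [Finset.one_lt_card]
          refine ⟨v, by rw [mem_kf], w, ?_, hvw.ne⟩
          rw [mem_kf]
          exact SimpleGraph.ConnectedComponent.sound hvw.symm.reachable
        exact this
      obtain ⟨x, hx⟩ := Finset.nonempty_iff_ne_empty.2 (h6 _ hk)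
      rw [← hB] at hx
      exact ⟨x, (Finset.mem_inter.1 hx).1⟩
    refine ⟨A, B, neA, neB, hdis, hu, ?_⟩
    rw [density_eq G A neA, density_eq G B neB, eA, eB]
    have h7 := hsum A B hdis hu
    have h8 : (2 * #A : ℚ) = n + dn1 + po + o := by exact_mod_cast cA
    have h9 : ((n : ℚ) + (dn1 : ℚ) + (po : ℚ) + (o : ℚ)) / 2 = #A := by linarith
    rw [h9]
    simp only [Nat.cast_zero, zero_div]
    linarith
end
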